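/- arXiv:1510.06819 — 12 statements merged into one kernel-verified Lean document; each statement's English description precedes it below -/
import Mathlib

section
/- Let A ⊆ ℝⁿ with 0 ∈ closure(A). Then A satisfies condition (SSP) if and only if for every direction a ∈ D(A), dist(t·a, A) = o(t) as t → 0⁺, i.e. dist(t·a, A)/t → 0 as t → 0⁺. -/
/-!
For a direction `a` of `A`, the points `t • a` with `t → 0⁺` have constant normalization `a`, so
(SSP) applied to them produces points of `A` at distance `o(t)`. Conversely, if the normalizations
of `a m` tend to `v ∈ D(A)`, then `a m` is within `o(‖a m‖)` of `‖a m‖ • v`, which is itself within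
`o(‖a m‖)` of `A`; the triangle inequality for `Metric.infDist` combines the two estimates.
-/

open Filter Topology Set

/-- The direction set `D(A)` of a set-germ `A` at `0`: unit vectors arising as limits of
`x_i / ‖x_i‖` for sequences `x_i ∈ A \ {0}` tending to `0`. -/
def dirSet {E : Type*} [NormedAddCommGroup E] [NormedSpace ℝ E] (A : Set E) : Set E :=
  {a | ‖a‖ = 1 ∧ ∃ x : ℕ → E, (∀ i, x i ∈ A \ {0}) ∧
    Tendsto x atTop (𝓝 0) ∧ Tendsto (fun i => (‖x i‖)⁻¹ • x i) atTop (𝓝 a)}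

/-- Condition (SSP): for every sequence of nonzero points `a_m → 0` whose normalizations
converge to a direction of `A`, there is a sequence `b_m ∈ A` with `‖a_m - b_m‖/‖a_m‖ → 0`. -/
def SSP {E : Type*} [NormedAddCommGroup E] [NormedSpace ℝ E] (A : Set E) : Prop :=
  ∀ a : ℕ → E, (∀ m, a m ≠ 0) → Tendsto a atTop (𝓝 0) →
    (∃ v ∈ dirSet A, Tendsto (fun m => (‖a m‖)⁻¹ • a m) atTop (𝓝 v)) →
    ∃ b : ℕ → E, (∀ m, b m ∈ A) ∧
      Tendsto (fun m => ‖a m - b m‖ / ‖a m‖) atTop (𝓝 0)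

/-- The half-cone `L(E)` over a set of directions. -/
def halfCone {E : Type*} [NormedAddCommGroup E] [NormedSpace ℝ E] (S : Set E) : Set E :=
  {x | ∃ a ∈ S, ∃ t : ℝ, 0 ≤ t ∧ x = t • a}

/-- The (real) tangent cone `LD(A) = L(D(A))` of `A` at `0`. -/
def LD {E : Type*} [NormedAddCommGroup E] [NormedSpace ℝ E] (A : Set E) : Set E :=
  halfCone (dirSet A)

/-- `A` satisfies (SSP) iff for every direction `a ∈ D(A)`,
`dist(t·a, A)/t → 0` as `t → 0⁺`. -/
theorem ssp_iff_infDist_littleO {n : ℕ} (A : Set (EuclideanSpace ℝ (Fin n)))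
    (hA : (0 : EuclideanSpace ℝ (Fin n)) ∈ closure A) :
    SSP A ↔ ∀ a ∈ dirSet A,
      Tendsto (fun t : ℝ => Metric.infDist (t • a) A / t) (𝓝[>] 0) (𝓝 0) := by
  constructor
  · intro h a ha
    have hna : ‖a‖ = 1 := ha.1
    apply tendsto_of_seq_tendsto
    intro t ht
    obtain ⟨ht0, htpos⟩ := tendsto_nhdsWithin_iff.1 ht
    -- (SSP) needs every term of the sequence to be nonzero, whereas `t` is only eventually
    -- positive; the finitely many bad terms are replaced by `1`.
    set s : ℕ → ℝ := fun m => if 0 < t m then t m else 1 with hs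
    have hspos : ∀ m, 0 < s m := by
      intro m
      simp only [hs]
      split_ifs with h1
      · exact h1
      · exact one_pos
    have hst : s =ᶠ[atTop] t := by
      filter_upwards [htpos] with m hm
      exact if_pos hm
    have hs0 : Tendsto s atTop (𝓝 0) := ht0.congr' hst.symm
    have hnorm : ∀ m, ‖s m • a‖ = s m := fun m => by
      rw [norm_smul, hna, mul_one, Real.norm_of_nonneg (hspos m).le]
    obtain ⟨b, hbA, hb⟩ := h (fun m => s m • a)
      (fun m => norm_pos_iff.1 (by rw [hnorm]; exact hspos m))
      (by simpa using hs0.smul_const a)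
      ⟨a, ha, tendsto_const_nhds.congr fun m => by
        rw [hnorm, smul_smul, inv_mul_cancel₀ (hspos m).ne', one_smul]⟩
    have key : Tendsto (fun m => Metric.infDist (s m • a) A / s m) atTop (𝓝 0) := by
      refine squeeze_zero (fun m => div_nonneg Metric.infDist_nonneg (hspos m).le)
        (fun m => ?_) hb
      rw [hnorm, ← dist_eq_norm]
      exact div_le_div_of_nonneg_right (Metric.infDist_le_dist_of_mem (hbA m)) (hspos m).le
    refine key.congr' ?_
    filter_upwards [hst] with m hm
    simp only [Function.comp_apply, hm]
  · rintro h a ha0 ha ⟨v, hv, hav⟩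
    have hne : A.Nonempty := closure_nonempty_iff.1 ⟨0, hA⟩
    have hpos : ∀ m, 0 < ‖a m‖ := fun m => norm_pos_iff.2 (ha0 m)
    -- The infimum need not be attained; the slack `‖a m‖ ^ 2` is `o(‖a m‖)`.
    have hex : ∀ m, ∃ b ∈ A, dist (a m) b < Metric.infDist (a m) A + ‖a m‖ ^ 2 := fun m =>
      (Metric.infDist_lt_iff hne).1 (lt_add_of_pos_right _ (pow_pos (hpos m) 2))
    choose b hbA hb using hex
    refine ⟨b, hbA, ?_⟩
    have hn : Tendsto (fun m => ‖a m‖) atTop (𝓝 0) := tendsto_zero_iff_norm_tendsto_zero.1 ha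
    have h1 : Tendsto (fun m => Metric.infDist (‖a m‖ • v) A / ‖a m‖) atTop (𝓝 0) :=
      (h v hv).comp (tendsto_nhdsWithin_iff.2 ⟨hn, Eventually.of_forall hpos⟩)
    have h2 : Tendsto (fun m => ‖(‖a m‖)⁻¹ • a m - v‖) atTop (𝓝 0) :=
      tendsto_iff_norm_sub_tendsto_zero.1 hav
    have h3 := (h1.add h2).add hn
    simp only [add_zero] at h3
    refine squeeze_zero (fun m => by positivity) (fun m => ?_) h3
    have e : dist (a m) (‖a m‖ • v) = ‖a m‖ * ‖(‖a m‖)⁻¹ • a m - v‖ := by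
      have e1 := norm_smul ‖a m‖ ((‖a m‖)⁻¹ • a m - v)
      rw [norm_norm] at e1
      rw [dist_eq_norm, ← e1, smul_sub, smul_smul, mul_inv_cancel₀ (hpos m).ne', one_smul]
    have h4 : Metric.infDist (a m) A ≤ Metric.infDist (‖a m‖ • v) A + dist (a m) (‖a m‖ • v) :=
      Metric.infDist_le_infDist_add_dist
    have h5 := hb m
    rw [e] at h4
    rw [dist_eq_norm] at h5
    rw [div_le_iff₀ (hpos m), add_mul, add_mul, div_mul_cancel₀ _ (hpos m).ne']
    linarith [h4, h5, sq ‖a m‖, mul_comm ‖a m‖ ‖(‖a m‖)⁻¹ • a m - v‖]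
end

section
/- Let (a_m) be a strictly decreasing sequence of positive real numbers with a_m → 0. Then the subset {a_m : m ∈ ℕ} of ℝ satisfies condition (SSP) at 0 if and only if a_m/a_{m+1} → 1 as m → ∞. -/
/-!
Every direction of the set `{a m}` is `1`, because its points are positive reals.

If (SSP) holds, apply it to the midpoints `c m = (a m + a (m + 1)) / 2`. No term of the sequence
lies strictly between `a (m + 1)` and `a m`, so every term is at distance at least
`(a m - a (m + 1)) / 2` from `c m`; hence `r m = (a m - a (m + 1)) / (a m + a (m + 1)) → 0`, and
`a m / a (m + 1) = (1 + r m) / (1 - r m) → 1`.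

Conversely, a sequence `x m → 0` with limiting direction `1` is eventually positive and smaller
than `a 0`, so `a (k m + 1) ≤ x m < a (k m)` for some index `k m`. Since `x m → 0`, `k m → ∞`, and
the relative error of approximating `x m` by `a (k m + 1)` is at most
`a (k m) / a (k m + 1) - 1 → 0`.
-/

open Filter Topology Set

/-- All directions of a set of positive reals equal `1`. -/
lemma eq_one_of_mem_dirSet_range {a : ℕ → ℝ} (hpos : ∀ m, 0 < a m) {v : ℝ}
    (hv : v ∈ dirSet (Set.range a)) : v = 1 := by
  obtain ⟨-, x, hx, -, hxv⟩ := hv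
  refine tendsto_nhds_unique hxv (tendsto_const_nhds.congr fun i => ?_)
  obtain ⟨k, hk⟩ := (hx i).1
  have h : 0 < x i := hk ▸ hpos k
  rw [Real.norm_of_nonneg h.le, smul_eq_mul, inv_mul_cancel₀ h.ne']

lemma one_mem_dirSet_range {a : ℕ → ℝ} (hpos : ∀ m, 0 < a m) (hlim : Tendsto a atTop (𝓝 0)) :
    (1 : ℝ) ∈ dirSet (Set.range a) := by
  refine ⟨by simp, a, fun i => ⟨⟨i, rfl⟩, (hpos i).ne'⟩, hlim,
    tendsto_const_nhds.congr fun i => ?_⟩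
  rw [Real.norm_of_nonneg (hpos i).le, smul_eq_mul, inv_mul_cancel₀ (hpos i).ne']

/-- Every term of an antitone sequence is at distance at least half the gap from the midpoint of
two consecutive terms. -/
lemma half_gap_le_abs_midpoint_sub {a : ℕ → ℝ} (hanti : Antitone a) (m k : ℕ) :
    (a m - a (m + 1)) / 2 ≤ |(a m + a (m + 1)) / 2 - a k| := by
  rcases Nat.lt_or_ge m k with h | h
  · have := hanti (Nat.succ_le_of_lt h)
    refine le_trans ?_ (le_abs_self _)
    simp only [Nat.succ_eq_add_one] at this
    linarith
  · have := hanti h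
    refine le_trans ?_ (neg_le_abs _)
    linarith

lemma ratio_tendsto_one_of_ssp_range {a : ℕ → ℝ} (hpos : ∀ m, 0 < a m) (hanti : StrictAnti a)
    (hlim : Tendsto a atTop (𝓝 0)) (h : SSP (Set.range a)) :
    Tendsto (fun m => a m / a (m + 1)) atTop (𝓝 1) := by
  have hc : ∀ m, 0 < (a m + a (m + 1)) / 2 := fun m => by
    have := hpos m
    have := hpos (m + 1)
    positivity
  have hc0 : Tendsto (fun m => (a m + a (m + 1)) / 2) atTop (𝓝 0) := by
    simpa using (hlim.add (hlim.comp (tendsto_add_atTop_nat 1))).div_const 2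
  obtain ⟨b, hb, hbt⟩ := h (fun m => (a m + a (m + 1)) / 2) (fun m => (hc m).ne') hc0
    ⟨1, one_mem_dirSet_range hpos hlim, tendsto_const_nhds.congr fun m => by
      rw [Real.norm_of_nonneg (hc m).le, smul_eq_mul, inv_mul_cancel₀ (hc m).ne']⟩
  have hr : Tendsto (fun m => (a m - a (m + 1)) / (a m + a (m + 1))) atTop (𝓝 0) := by
    refine squeeze_zero (fun m => ?_) (fun m => ?_) hbt
    · have := hanti (Nat.lt_succ_self m)
      have := hc m
      exact div_nonneg (by simp only [Nat.succ_eq_add_one] at *; linarith) (by linarith)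
    · obtain ⟨k, hk⟩ := hb m
      rw [← hk, Real.norm_of_nonneg (hc m).le, Real.norm_eq_abs]
      calc (a m - a (m + 1)) / (a m + a (m + 1))
          = ((a m - a (m + 1)) / 2) / ((a m + a (m + 1)) / 2) :=
            (div_div_div_cancel_right₀ two_ne_zero _ _).symm
        _ ≤ _ := div_le_div_of_nonneg_right
            (half_gap_le_abs_midpoint_sub hanti.antitone m k) (hc m).le
  have hq := (hr.const_add 1).div (hr.const_sub 1) (by norm_num)
  simp only [add_zero, sub_zero, div_one] at hq
  refine hq.congr fun m => ?_
  have h1 := hpos m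
  have h2 := hpos (m + 1)
  have h3 : a m + a (m + 1) ≠ 0 := by positivity
  have e1 : 1 + (a m - a (m + 1)) / (a m + a (m + 1)) = 2 * a m / (a m + a (m + 1)) := by
    field_simp
    ring
  have e2 : 1 - (a m - a (m + 1)) / (a m + a (m + 1)) = 2 * a (m + 1) / (a m + a (m + 1)) := by
    field_simp
    ring
  simp only [Pi.div_apply]
  rw [e1, e2, div_div_div_cancel_right₀ h3, mul_div_mul_left _ _ two_ne_zero]

/-- A positive number below `a 0` lies in some interval `[a (k + 1), a k)`. -/
lemma exists_le_lt_of_tendsto_zero {a : ℕ → ℝ} (hlim : Tendsto a atTop (𝓝 0)) {x : ℝ}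
    (hx : 0 < x) (hx0 : x < a 0) : ∃ k, a (k + 1) ≤ x ∧ x < a k := by
  by_contra! H
  have hlt : ∀ k, x < a k := fun k => by
    induction k with
    | zero => exact hx0
    | succ k ih => exact lt_of_not_ge fun hk => absurd ih (not_lt.2 (H k hk))
  obtain ⟨k, hk⟩ := (hlim.eventually_lt_const hx).exists
  exact lt_asymm hk (hlt k)

lemma ssp_range_of_ratio_tendsto_one {a : ℕ → ℝ} (hpos : ∀ m, 0 < a m) (hanti : StrictAnti a)
    (hlim : Tendsto a atTop (𝓝 0)) (h : Tendsto (fun m => a m / a (m + 1)) atTop (𝓝 1)) :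
    SSP (Set.range a) := by
  rintro x - hx ⟨v, hv, hxv⟩
  obtain rfl := eq_one_of_mem_dirSet_range hpos hv
  have hxpos : ∀ᶠ m in atTop, 0 < x m := by
    filter_upwards [hxv.eventually_const_lt zero_lt_one] with m hm
    exact pos_of_mul_pos_right hm (inv_nonneg.2 (norm_nonneg _))
  have hk : ∀ m, ∃ k, 0 < x m → x m < a 0 → a (k + 1) ≤ x m ∧ x m < a k := fun m => by
    by_cases hm : 0 < x m ∧ x m < a 0
    · obtain ⟨k, hk⟩ := exists_le_lt_of_tendsto_zero hlim hm.1 hm.2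
      exact ⟨k, fun _ _ => hk⟩
    · exact ⟨0, fun h1 h2 => absurd ⟨h1, h2⟩ hm⟩
  choose k hk using hk
  have hk' : ∀ᶠ m in atTop, 0 < x m ∧ a (k m + 1) ≤ x m ∧ x m < a (k m) := by
    filter_upwards [hxpos, hx.eventually_lt_const (hpos 0)] with m h1 h2
    exact ⟨h1, hk m h1 h2⟩
  have hktop : Tendsto k atTop atTop := by
    refine tendsto_atTop.2 fun N => ?_
    filter_upwards [hk', hx.eventually_lt_const (hpos N)] with m h1 h2
    exact Nat.le_of_lt_succ (hanti.lt_iff_gt.1 (h1.2.1.trans_lt h2))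
  refine ⟨fun m => a (k m + 1), fun m => ⟨_, rfl⟩, ?_⟩
  have hbound : Tendsto (fun m => a (k m) / a (k m + 1) - 1) atTop (𝓝 0) := by
    simpa using (h.comp hktop).sub_const 1
  refine squeeze_zero' (Eventually.of_forall fun m => by positivity) ?_ hbound
  filter_upwards [hk'] with m ⟨h1, h2, h3⟩
  have hp := hpos (k m + 1)
  rw [Real.norm_of_nonneg h1.le, Real.norm_of_nonneg (sub_nonneg.2 h2), div_sub_one hp.ne']
  exact div_le_div₀ (by linarith) (by linarith) hp h2

/-- a strictly decreasing positive sequence tending to `0` satisfies (SSP)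
(as a subset of `ℝ`) iff `a m / a (m+1) → 1`. -/
theorem ssp_range_iff_ratio_tendsto_one (a : ℕ → ℝ)
    (hpos : ∀ m, 0 < a m) (hanti : StrictAnti a) (hlim : Tendsto a atTop (𝓝 0)) :
    SSP (Set.range a) ↔ Tendsto (fun m => a m / a (m + 1)) atTop (𝓝 1) := by
  exact ⟨ratio_tendsto_one_of_ssp_range hpos hanti hlim,
    ssp_range_of_ratio_tendsto_one hpos hanti hlim⟩
end

section
/- Let (a_m) and (b_m) be strictly decreasing sequences of positive real numbers tending to 0 whose associated subsets of ℝ satisfy condition (SSP) at 0. Then the termwise sum (a_m + b_m) and the termwise product (a_m · b_m) are again strictly decreasing sequences of positive reals tending to 0 whose associated subsets of ℝ satisfy condition (SSP) at 0. In other words, the class 𝒜_SSP of such sequences is closed under termwise addition and termwise multiplication. -/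
/-!
For a strictly decreasing positive null sequence `a`, condition (SSP) for the set of its values is
equivalent to `a m / a (m + 1) → 1`.

* If (SSP) holds, test it on the midpoints `(a m + a (m + 1)) / 2`. No term of `a` is closer to
  this midpoint than half the gap, so `(a m - a (m + 1)) / (a m + a (m + 1)) → 0`
  (`SSP.tendsto_ratio`).
* Conversely, the only direction of the set is `1`, so a test sequence `c` is eventually positive;
  if `a (k + 1) < c m ≤ a k`, the relative error of approximating `c m` by `a k` is at most
  `a k / a (k + 1) - 1`, and `k → ∞` because `c m → 0` (`ssp_of_tendsto_ratio`).

The ratio condition is clearly stable under products, and for sums it follows from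
`1 ≤ (a + b) / (a' + b') ≤ a / a' + b / b' - 1` when `0 < a' ≤ a` and `0 < b' ≤ b`.
-/

open Filter Topology Set

lemma SSP.tendsto_ratio {a : ℕ → ℝ} (hpos : ∀ m, 0 < a m) (hanti : StrictAnti a)
    (hlim : Tendsto a atTop (𝓝 0)) (hssp : SSP (Set.range a)) :
    Tendsto (fun m => a m / a (m + 1)) atTop (𝓝 1) := by
  have hcpos : ∀ m, 0 < (a m + a (m + 1)) / 2 := fun m => by
    linarith [hpos m, hpos (m + 1)]
  have hclim : Tendsto (fun m => (a m + a (m + 1)) / 2) atTop (𝓝 0) := by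
    simpa using (hlim.add ((tendsto_add_atTop_iff_nat 1).2 hlim)).div_const 2
  obtain ⟨d, hd, hdlim⟩ := hssp _ (fun m => (hcpos m).ne') hclim
    ⟨1, one_mem_dirSet_range hpos hlim, tendsto_const_nhds.congr fun m => by
      rw [Real.norm_of_nonneg (hcpos m).le, smul_eq_mul, inv_mul_cancel₀ (hcpos m).ne']⟩
  have hq : Tendsto (fun m => (a m - a (m + 1)) / (a m + a (m + 1))) atTop (𝓝 0) := by
    refine squeeze_zero (fun m => ?_) (fun m => ?_) hdlim
    · exact div_nonneg (sub_nonneg.2 (hanti (Nat.lt_succ_self m)).le)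
        (by linarith [hpos m, hpos (m + 1)])
    · obtain ⟨k, hk⟩ := hd m
      have hgap : (a m - a (m + 1)) / 2 ≤ ‖(a m + a (m + 1)) / 2 - d m‖ := by
        rw [← hk, Real.norm_eq_abs]
        rcases Nat.lt_or_ge m k with h | h
        · have := hanti.antitone (Nat.succ_le_of_lt h)
          exact le_trans (by linarith) (le_abs_self _)
        · have := hanti.antitone h
          exact le_trans (by linarith) (neg_le_abs _)
      rw [Real.norm_of_nonneg (hcpos m).le]
      calc (a m - a (m + 1)) / (a m + a (m + 1))
          = ((a m - a (m + 1)) / 2) / ((a m + a (m + 1)) / 2) := by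
            rw [div_div_div_cancel_right₀ (two_ne_zero)]
        _ ≤ _ := div_le_div_of_nonneg_right hgap (hcpos m).le
  -- With `q` the quantity above, `a m / a (m + 1) = (1 + q) / (1 - q)`.
  have h := (hq.const_add 1).div (hq.const_sub 1) (by norm_num)
  simp only [add_zero, sub_zero, div_one] at h
  refine h.congr fun m => ?_
  have h1 := hpos m
  have h2 := hpos (m + 1)
  have h3 : a m + a (m + 1) ≠ 0 := by positivity
  have e1 : 1 + (a m - a (m + 1)) / (a m + a (m + 1)) = 2 * a m / (a m + a (m + 1)) := by
    field_simp
    ring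
  have e2 : 1 - (a m - a (m + 1)) / (a m + a (m + 1)) = 2 * a (m + 1) / (a m + a (m + 1)) := by
    field_simp
    ring
  simp only [Pi.div_apply, e1, e2]
  field_simp

/-- Every `c ∈ (0, a 0]` lies in some interval `(a (k + 1), a k]`. For `c > a 0` only the lower
bound is claimed. -/
lemma exists_bracket {a : ℕ → ℝ} (hlim : Tendsto a atTop (𝓝 0)) {c : ℝ} (hc : 0 < c) :
    ∃ k, a (k + 1) < c ∧ (c ≤ a 0 → c ≤ a k) := by
  classical
  have hex : ∃ k, a (k + 1) < c :=
    (((tendsto_add_atTop_iff_nat 1).2 hlim).eventually (gt_mem_nhds hc)).exists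
  refine ⟨Nat.find hex, Nat.find_spec hex, fun h0 => ?_⟩
  rcases hk : Nat.find hex with _ | k
  · exact h0
  · exact not_lt.1 (Nat.find_min hex (m := k) (by omega))

lemma ssp_of_tendsto_ratio {a : ℕ → ℝ} (hpos : ∀ m, 0 < a m) (hanti : StrictAnti a)
    (hlim : Tendsto a atTop (𝓝 0)) (hr : Tendsto (fun m => a m / a (m + 1)) atTop (𝓝 1)) :
    SSP (Set.range a) := by
  rintro c hc0 hclim ⟨v, hv, hcv⟩
  rw [eq_one_of_mem_dirSet_range hpos hv] at hcv
  have hcpos : ∀ᶠ m in atTop, 0 < c m := by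
    filter_upwards [hcv.eventually (lt_mem_nhds one_pos)] with m hm
    exact pos_of_mul_pos_right hm (inv_nonneg.2 (norm_nonneg _))
  have hbr : ∀ m, ∃ k, 0 < c m → a (k + 1) < c m ∧ (c m ≤ a 0 → c m ≤ a k) := fun m => by
    by_cases h : 0 < c m
    · obtain ⟨k, hk⟩ := exists_bracket hlim h
      exact ⟨k, fun _ => hk⟩
    · exact ⟨0, fun h' => absurd h' h⟩
  choose K hK using hbr
  have hKlim : Tendsto K atTop atTop := by
    refine tendsto_atTop.2 fun N => ?_
    filter_upwards [hcpos, hclim.eventually (gt_mem_nhds (hpos N))] with m hm hmN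
    have := hanti.lt_iff_gt.1 ((hK m hm).1.trans hmN)
    omega
  refine ⟨fun m => a (K m), fun m => ⟨K m, rfl⟩, ?_⟩
  have hbound : Tendsto (fun m => a (K m) / a (K m + 1) - 1) atTop (𝓝 0) := by
    simpa using (hr.comp hKlim).sub_const 1
  refine squeeze_zero' (Eventually.of_forall fun m => by positivity) ?_ hbound
  filter_upwards [hcpos, hclim.eventually (gt_mem_nhds (hpos 0))] with m hm hm0
  obtain ⟨h1, h2⟩ := hK m hm
  have h2 := h2 hm0.le
  rw [Real.norm_of_nonneg hm.le, Real.norm_of_nonpos (sub_nonpos.2 h2), neg_sub,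
    sub_div, div_self hm.ne']
  have := div_le_div_of_nonneg_left (hpos (K m)).le (hpos (K m + 1)) h1.le
  linarith

/-- the class of strictly decreasing positive null sequences satisfying (SSP)
is closed under termwise addition and termwise multiplication. -/
theorem ssp_seq_closed_under_add_mul (a b : ℕ → ℝ)
    (hapos : ∀ m, 0 < a m) (hbpos : ∀ m, 0 < b m)
    (haanti : StrictAnti a) (hbanti : StrictAnti b)
    (halim : Tendsto a atTop (𝓝 0)) (hblim : Tendsto b atTop (𝓝 0))
    (hassp : SSP (Set.range a)) (hbssp : SSP (Set.range b)) :
    (StrictAnti (fun m => a m + b m) ∧ (∀ m, 0 < a m + b m) ∧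
      Tendsto (fun m => a m + b m) atTop (𝓝 0) ∧ SSP (Set.range fun m => a m + b m)) ∧
    (StrictAnti (fun m => a m * b m) ∧ (∀ m, 0 < a m * b m) ∧
      Tendsto (fun m => a m * b m) atTop (𝓝 0) ∧ SSP (Set.range fun m => a m * b m)) := by
  have hra := hassp.tendsto_ratio hapos haanti halim
  have hrb := hbssp.tendsto_ratio hbpos hbanti hblim
  have santi : StrictAnti (fun m => a m + b m) := fun i j h => add_lt_add (haanti h) (hbanti h)
  have spos : ∀ m, 0 < a m + b m := fun m => add_pos (hapos m) (hbpos m)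
  have slim : Tendsto (fun m => a m + b m) atTop (𝓝 0) := by simpa using halim.add hblim
  have panti : StrictAnti (fun m => a m * b m) := fun i j h =>
    mul_lt_mul'' (haanti h) (hbanti h) (hapos j).le (hbpos j).le
  have ppos : ∀ m, 0 < a m * b m := fun m => mul_pos (hapos m) (hbpos m)
  have plim : Tendsto (fun m => a m * b m) atTop (𝓝 0) := by simpa using halim.mul hblim
  refine ⟨⟨santi, spos, slim, ssp_of_tendsto_ratio spos santi slim ?_⟩,
    ⟨panti, ppos, plim, ssp_of_tendsto_ratio ppos panti plim ?_⟩⟩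
  · have hup : Tendsto (fun m => a m / a (m + 1) + b m / b (m + 1) - 1) atTop (𝓝 1) := by
      simpa using (hra.add hrb).sub_const 1
    refine tendsto_of_tendsto_of_tendsto_of_le_of_le tendsto_const_nhds hup
      (fun m => (one_le_div (spos _)).2 (santi (Nat.lt_succ_self m)).le) fun m => ?_
    have ha := haanti (Nat.lt_succ_self m)
    have hb := hbanti (Nat.lt_succ_self m)
    have h1 := div_le_div_of_nonneg_left (sub_nonneg.2 ha.le) (hapos (m + 1))
      (le_add_of_nonneg_right (hbpos (m + 1)).le)
    have h2 := div_le_div_of_nonneg_left (sub_nonneg.2 hb.le) (hbpos (m + 1))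
      (le_add_of_nonneg_left (hapos (m + 1)).le)
    have e : (a m + b m) / (a (m + 1) + b (m + 1)) =
        (a m - a (m + 1)) / (a (m + 1) + b (m + 1)) +
          (b m - b (m + 1)) / (a (m + 1) + b (m + 1)) + 1 := by
      have := (spos (m + 1)).ne'
      field_simp
      ring
    have ea : (a m - a (m + 1)) / a (m + 1) = a m / a (m + 1) - 1 := by
      rw [sub_div, div_self (hapos _).ne']
    have eb : (b m - b (m + 1)) / b (m + 1) = b m / b (m + 1) - 1 := by
      rw [sub_div, div_self (hbpos _).ne']
    simp only [Nat.succ_eq_add_one] at h1 h2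
    rw [ea] at h1
    rw [eb] at h2
    simp only [e]
    linarith
  · simpa [mul_div_mul_comm] using hra.mul hrb
end

section
/- Let a_m := log((m+1)/m) for m ∈ ℕ, m ≥ 1. Then (a_m) is a strictly decreasing sequence of positive reals tending to 0, the subset {a_m : m ≥ 1} of ℝ satisfies condition (SSP) at 0, and (a_m) is polynomially bounded; indeed a_m ≥ 1/m² for all m ≥ 2. -/
/-!
Everything rests on the elementary bounds `1 / (m + 1) ≤ log ((m + 1) / m) ≤ 1 / m`.
The lower one gives polynomial boundedness, since `m + 1 ≤ m ^ 2` for `m ≥ 2`.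
For (SSP): a set of positive reals has only the direction `1`, so a test sequence is eventually
positive. A small `x > 0` is approximated by the term of index `n = ⌊1 / x⌋ + 1`; as
`1 / x < n ≤ 1 / x + 1`, the bounds place that term between `x / (1 + 2 * x)` and `x`, so the
relative error is at most `2 * x`, which tends to `0`.
-/


open Filter Topology Set

lemma log_succ_div_le {m : ℕ} (hm : 1 ≤ m) :
    Real.log ((m + 1 : ℝ) / (m : ℝ)) ≤ 1 / (m : ℝ) := by
  have h0 : (0 : ℝ) < m := by exact_mod_cast hm
  refine (Real.log_le_sub_one_of_pos (by positivity)).trans (le_of_eq ?_)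
  field_simp
  ring

lemma le_log_succ_div {m : ℕ} (hm : 1 ≤ m) :
    1 / ((m : ℝ) + 1) ≤ Real.log ((m + 1 : ℝ) / (m : ℝ)) := by
  have h0 : (0 : ℝ) < m := by exact_mod_cast hm
  refine le_trans (le_of_eq ?_) (Real.one_sub_inv_le_log_of_pos (by positivity))
  field_simp
  ring

/-- The term of index `⌊1 / x⌋ + 1` approximates `x > 0` with relative error at most `2 * x`. -/
lemma log_succ_div_approx {x : ℝ} (hx : 0 < x) :
    ‖x - Real.log (((⌊1 / x⌋₊ + 1 : ℕ) + 1 : ℝ) / ((⌊1 / x⌋₊ + 1 : ℕ) : ℝ))‖ / ‖x‖ ≤ 2 * x := by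
  have hlt : 1 / x < ((⌊1 / x⌋₊ + 1 : ℕ) : ℝ) := by
    push_cast
    exact Nat.lt_floor_add_one _
  have hle : ((⌊1 / x⌋₊ + 1 : ℕ) : ℝ) ≤ 1 / x + 1 := by
    push_cast
    linarith [Nat.floor_le (one_div_pos.2 hx).le]
  have hn : 1 ≤ ⌊1 / x⌋₊ + 1 := by omega
  generalize ⌊1 / x⌋₊ + 1 = n at *
  have hn0 : (0 : ℝ) < n := by exact_mod_cast hn
  have hup : Real.log ((n + 1 : ℝ) / n) ≤ x :=
    (log_succ_div_le hn).trans ((one_div_lt hx hn0).1 hlt).le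
  have hlow : x / (1 + 2 * x) ≤ Real.log ((n + 1 : ℝ) / n) := by
    refine le_trans ?_ (le_log_succ_div hn)
    calc x / (1 + 2 * x) = 1 / (1 / x + 1 + 1) := by
          field_simp
          ring
      _ ≤ 1 / ((n : ℝ) + 1) := by gcongr
  have hq : x - 2 * x * x ≤ x / (1 + 2 * x) := by
    rw [le_div_iff₀ (by positivity)]
    nlinarith [pow_pos hx 3]
  rw [Real.norm_of_nonneg (sub_nonneg.2 hup), Real.norm_of_nonneg hx.le, div_le_iff₀ hx]
  linarith

/-- A set of positive reals has no direction other than `1`. -/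
lemma eq_one_of_mem_dirSet {A : Set ℝ} (hA : ∀ x ∈ A, 0 < x) {v : ℝ} (hv : v ∈ dirSet A) :
    v = 1 := by
  obtain ⟨hv1, x, hxA, -, hxv⟩ := hv
  have h0 : 0 ≤ v := ge_of_tendsto' hxv fun i =>
    smul_nonneg (inv_nonneg.2 (norm_nonneg _)) (hA _ (hxA i).1).le
  rwa [Real.norm_of_nonneg h0] at hv1

/-- `a_m = log((m+1)/m)` is a strictly decreasing positive null sequence
(for `m ≥ 1`), satisfies (SSP) at `0`, and is polynomially bounded: `a_m ≥ 1/m²` for `m ≥ 2`. -/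
theorem log_succ_div_self_ssp_and_polyBounded :
    let a : ℕ → ℝ := fun m => Real.log ((m + 1 : ℝ) / (m : ℝ))
    StrictAntiOn a (Set.Ici 1) ∧ (∀ m, 1 ≤ m → 0 < a m) ∧
    Tendsto a atTop (𝓝 0) ∧
    SSP {x : ℝ | ∃ m, 1 ≤ m ∧ a m = x} ∧
    (∃ k : ℕ, 1 ≤ k ∧ ∀ m, 2 ≤ m → a m ≥ 1 / (m : ℝ) ^ k) ∧
    (∀ m, 2 ≤ m → a m ≥ 1 / (m : ℝ) ^ 2) := by
  intro a
  have hpos : ∀ m, 1 ≤ m → 0 < a m := fun m hm =>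
    lt_of_lt_of_le (by positivity) (le_log_succ_div hm)
  have hpoly : ∀ m, 2 ≤ m → a m ≥ 1 / (m : ℝ) ^ 2 := by
    intro m hm
    refine le_trans ?_ (le_log_succ_div (by omega : 1 ≤ m))
    have h2 : (2 : ℝ) ≤ m := by exact_mod_cast hm
    exact one_div_le_one_div_of_le (by positivity) (by nlinarith)
  refine ⟨?_, hpos, ?_, ?_, ⟨2, by norm_num, hpoly⟩, hpoly⟩
  · intro m hm n hn hmn
    have hm0 : (0 : ℝ) < m := by exact_mod_cast (Set.mem_Ici.1 hm)
    have hn0 : (0 : ℝ) < n := by exact_mod_cast (Set.mem_Ici.1 hn)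
    have hmn' : (m : ℝ) < n := by exact_mod_cast hmn
    refine Real.log_lt_log (by positivity) ?_
    rw [div_lt_div_iff₀ hn0 hm0]
    nlinarith
  · refine tendsto_of_tendsto_of_tendsto_of_le_of_le' tendsto_const_nhds
      tendsto_one_div_atTop_nhds_zero_nat ?_ ?_
    · filter_upwards [eventually_ge_atTop 1] with m hm using (hpos m hm).le
    · filter_upwards [eventually_ge_atTop 1] with m hm using log_succ_div_le hm
  · rintro x - hx0 ⟨v, hv, hxv⟩
    have hv1 : v = 1 := eq_one_of_mem_dirSet (by rintro _ ⟨m, hm, rfl⟩; exact hpos m hm) hv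
    subst hv1
    have hxpos : ∀ᶠ i in atTop, 0 < x i := by
      filter_upwards [hxv.eventually (lt_mem_nhds one_pos)] with i hi
      exact pos_of_mul_pos_right hi (inv_nonneg.2 (norm_nonneg _))
    refine ⟨fun i => a (⌊1 / x i⌋₊ + 1), fun i => ⟨_, by omega, rfl⟩, ?_⟩
    refine tendsto_of_tendsto_of_tendsto_of_le_of_le' (h := fun i => 2 * x i)
      tendsto_const_nhds (by simpa using hx0.const_mul 2)
      (Eventually.of_forall fun i => by positivity) ?_
    filter_upwards [hxpos] with i hi using log_succ_div_approx hi
end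

section
/- Let a_m := 1/m^{√m} = m^{−√m} for m ∈ ℕ, m ≥ 1. Then (a_m) is a strictly decreasing sequence of positive reals tending to 0, a_m/a_{m+1} → 1 as m → ∞ (so the subset {a_m : m ≥ 1} of ℝ satisfies condition (SSP) at 0), but (a_m) is not polynomially bounded: for every positive integer k there exists m ≥ 2 with a_m < 1/m^k. -/
/-!
Write `a m = exp (-f m)` with `f m = √m * log m`. Monotonicity, positivity and `a → 0` follow
from the corresponding properties of `f`. The ratio `a m / a (m + 1)` is `exp (f (m + 1) - f m)`,
and the increment `f (m + 1) - f m` is at most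
`log (m + 1) / √(m + 1) + 1 / √m`, which tends to `0` because the logarithm grows more slowly
than the square root (`tendsto_increment`).

Condition (SSP) holds for any positive, strictly decreasing null sequence with `a m / a (m + 1) → 1`
(`ssp_of_ratio`): the only direction is `1`, and a small `x > 0` lies in some interval
`[a (n + 1), a n)`, so that `|x - a (n + 1)| / x ≤ 1 - a (n + 1) / a n`, where `n → ∞` as `x → 0`.

Polynomial boundedness with exponent `k` fails at `m = (k + 1) ^ 2`, where `√m = k + 1`.
-/

open Filter Topology Set

/-- A strictly decreasing positive null sequence whose consecutive ratios tend to `1` satisfies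
(SSP). -/
lemma ssp_of_ratio (a : ℕ → ℝ) (hanti : StrictAntiOn a (Set.Ici 1))
    (hpos : ∀ m, 1 ≤ m → 0 < a m) (hlim : Tendsto a atTop (𝓝 0))
    (hratio : Tendsto (fun m => a m / a (m + 1)) atTop (𝓝 1)) :
    SSP {x : ℝ | ∃ m, 1 ≤ m ∧ a m = x} := by
  intro x hx0 hx ⟨v, hv, hxv⟩
  have hv1 : v = 1 := eq_one_of_mem_dirSet (by rintro _ ⟨m, hm, rfl⟩; exact hpos m hm) hv
  subst hv1
  have hxpos : ∀ᶠ m in atTop, 0 < x m := by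
    filter_upwards [hxv.eventually (lt_mem_nhds one_pos)] with m hm
    exact pos_of_mul_pos_right hm (by positivity)
  have hinv : Tendsto (fun m => a (m + 1) / a m) atTop (𝓝 1) := by
    simpa using hratio.inv₀ one_ne_zero
  -- For `0 < y`, let `n` be the first index with `a (n + 1) ≤ y`, so `y < a n` unless `n = 0`.
  have hex : ∀ y : ℝ, ∃ n : ℕ, 0 < y → a (n + 1) ≤ y ∧ (1 ≤ n → y < a n) := by
    intro y
    by_cases hy : 0 < y
    · have h : ∃ n, a (n + 1) ≤ y := by
        obtain ⟨n, hn⟩ := (((tendsto_add_atTop_iff_nat 1).2 hlim).eventually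
          (gt_mem_nhds hy)).exists
        exact ⟨n, hn.le⟩
      classical
      refine ⟨Nat.find h, fun _ => ⟨Nat.find_spec h, fun h1 => ?_⟩⟩
      have h2 := Nat.find_min h (m := Nat.find h - 1) (by omega)
      rw [Nat.sub_add_cancel h1] at h2
      exact not_le.1 h2
    · exact ⟨0, fun h => absurd h hy⟩
  choose n hn using hex
  refine ⟨fun m => a (n (x m) + 1), fun m => ⟨_, by omega, rfl⟩, ?_⟩
  rw [Metric.tendsto_atTop']
  intro ε hε
  obtain ⟨N, hN⟩ := eventually_atTop.1 (hinv.eventually (lt_mem_nhds (sub_lt_self 1 hε)))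
  have hev := hxpos.and (hx.eventually (gt_mem_nhds (hpos (N + 1) (by omega))))
  obtain ⟨M, hM⟩ := eventually_atTop.1 hev
  refine ⟨M, fun m hm => ?_⟩
  obtain ⟨hxm, hxN⟩ := hM m hm.le
  obtain ⟨hle, hlt⟩ := hn (x m) hxm
  have hNn : N < n (x m) := by
    by_contra! hcon
    have := hanti.antitoneOn (a := n (x m) + 1) (b := N + 1) (by simp) (by simp) (by omega)
    linarith
  have hlt := hlt (by omega)
  have h1 := hN _ hNn.le
  have han := hpos (n (x m)) (by omega)
  have han1 := hpos (n (x m) + 1) (by omega)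
  rw [Real.dist_eq, sub_zero, abs_of_nonneg (by positivity), Real.norm_of_nonneg (by linarith),
    Real.norm_of_nonneg hxm.le, sub_div, div_self hxm.ne']
  have h2 : a (n (x m) + 1) / a (n (x m)) ≤ a (n (x m) + 1) / x m := by gcongr
  linarith

lemma rpow_neg_sqrt_eq_exp {m : ℕ} (hm : 1 ≤ m) :
    (m : ℝ) ^ (-√(m : ℝ)) = Real.exp (-(√(m : ℝ) * Real.log m)) := by
  rw [Real.rpow_def_of_pos (by exact_mod_cast hm)]
  congr 1
  ring

lemma tendsto_increment :
    Tendsto (fun m : ℕ => √((m + 1 : ℕ) : ℝ) * Real.log ((m + 1 : ℕ) : ℝ) - √(m : ℝ) * Real.log m)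
      atTop (𝓝 0) := by
  have hlog : Tendsto (fun m : ℕ => Real.log ((m + 1 : ℕ) : ℝ) / √((m + 1 : ℕ) : ℝ))
      atTop (𝓝 0) := by
    have h := (isLittleO_log_rpow_atTop (r := 1 / 2) (by norm_num)).tendsto_div_nhds_zero
    simp only [← Real.sqrt_eq_rpow] at h
    exact (tendsto_add_atTop_iff_nat 1).2 (h.comp tendsto_natCast_atTop_atTop)
  have hinv : Tendsto (fun m : ℕ => (√(m : ℝ))⁻¹) atTop (𝓝 0) :=
    tendsto_inv_atTop_zero.comp (Real.tendsto_sqrt_atTop.comp tendsto_natCast_atTop_atTop)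
  have hsum := hlog.add hinv
  rw [add_zero] at hsum
  refine tendsto_of_tendsto_of_tendsto_of_le_of_le' tendsto_const_nhds hsum ?_ ?_
  · filter_upwards [eventually_ge_atTop 1] with m hm
    have hm' : (1 : ℝ) ≤ m := by exact_mod_cast hm
    have := Real.log_nonneg hm'
    rw [sub_nonneg]
    gcongr <;> omega
  · filter_upwards [eventually_ge_atTop 1] with m hm
    have hm' : (1 : ℝ) ≤ m := by exact_mod_cast hm
    push_cast
    have hs : 0 < √(m : ℝ) := Real.sqrt_pos.2 (by linarith)
    have ht : 0 < √((m : ℝ) + 1) := Real.sqrt_pos.2 (by linarith)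
    have hs2 : √(m : ℝ) ^ 2 = m := Real.sq_sqrt (by linarith)
    have ht2 : √((m : ℝ) + 1) ^ 2 = m + 1 := Real.sq_sqrt (by linarith)
    have hL : 0 ≤ Real.log ((m : ℝ) + 1) := Real.log_nonneg (by linarith)
    have hst : √(m : ℝ) ≤ √((m : ℝ) + 1) := Real.sqrt_le_sqrt (by linarith)
    -- `√(m+1) - √m = 1 / (√(m+1) + √m)`
    have h1 : √((m : ℝ) + 1) - √(m : ℝ) ≤ 1 / √((m : ℝ) + 1) := by
      rw [le_div_iff₀ ht]
      nlinarith
    have h2 : Real.log ((m : ℝ) + 1) - Real.log m ≤ 1 / m := by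
      rw [← Real.log_div (by positivity) (by positivity)]
      refine (Real.log_le_sub_one_of_pos (by positivity)).trans (le_of_eq ?_)
      field_simp
      ring
    have h3 := mul_le_mul_of_nonneg_right h1 hL
    have h4 := mul_le_mul_of_nonneg_left h2 hs.le
    have h5 : √(m : ℝ) * (1 / m) = (√(m : ℝ))⁻¹ := by
      nth_rewrite 2 [← hs2]
      field_simp
    have h6 : 1 / √((m : ℝ) + 1) * Real.log ((m : ℝ) + 1)
        = Real.log ((m : ℝ) + 1) / √((m : ℝ) + 1) := by ring
    rw [h5] at h4
    rw [h6] at h3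
    linarith

/-- `a_m = m^{-√m}` is a strictly decreasing positive null sequence (for `m ≥ 1`)
with `a_m / a_{m+1} → 1` (hence the set `{a_m : m ≥ 1}` satisfies (SSP) at `0`),
but it is not polynomially bounded. -/
theorem pow_neg_sqrt_ssp_not_polyBounded :
    let a : ℕ → ℝ := fun m => (m : ℝ) ^ (-Real.sqrt (m : ℝ))
    StrictAntiOn a (Set.Ici 1) ∧ (∀ m, 1 ≤ m → 0 < a m) ∧
    Tendsto a atTop (𝓝 0) ∧
    Tendsto (fun m => a m / a (m + 1)) atTop (𝓝 1) ∧
    SSP {x : ℝ | ∃ m, 1 ≤ m ∧ a m = x} ∧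
    (∀ k : ℕ, 1 ≤ k → ∃ m, 2 ≤ m ∧ a m < 1 / (m : ℝ) ^ k) := by
  intro a
  have hanti : StrictAntiOn a (Set.Ici 1) := by
    intro m hm n hn hmn
    have hm : 1 ≤ m := hm
    have hn : 1 ≤ n := hn
    have hm' : (1 : ℝ) ≤ m := by exact_mod_cast hm
    have hmn' : (m : ℝ) < n := by exact_mod_cast hmn
    simp only [a]
    rw [rpow_neg_sqrt_eq_exp hm, rpow_neg_sqrt_eq_exp hn, Real.exp_lt_exp, neg_lt_neg_iff]
    exact mul_lt_mul'' (Real.sqrt_lt_sqrt (by linarith) hmn')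
      (Real.log_lt_log (by linarith) hmn') (Real.sqrt_nonneg _) (Real.log_nonneg hm')
  have hpos : ∀ m, 1 ≤ m → 0 < a m := fun m hm =>
    Real.rpow_pos_of_pos (by exact_mod_cast hm) _
  have hlim : Tendsto a atTop (𝓝 0) := by
    have h : Tendsto (fun m : ℕ => √(m : ℝ) * Real.log m) atTop atTop :=
      (Real.tendsto_sqrt_atTop.atTop_mul_atTop₀ Real.tendsto_log_atTop).comp
        tendsto_natCast_atTop_atTop
    refine (Real.tendsto_exp_neg_atTop_nhds_zero.comp h).congr' ?_
    filter_upwards [eventually_ge_atTop 1] with m hm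
    exact (rpow_neg_sqrt_eq_exp hm).symm
  have hratio : Tendsto (fun m => a m / a (m + 1)) atTop (𝓝 1) := by
    have h := (Real.continuous_exp.tendsto 0).comp tendsto_increment
    rw [Real.exp_zero] at h
    refine h.congr' ?_
    filter_upwards [eventually_ge_atTop 1] with m hm
    simp only [a, Function.comp]
    rw [rpow_neg_sqrt_eq_exp hm, rpow_neg_sqrt_eq_exp (by omega : 1 ≤ m + 1), ← Real.exp_sub]
    congr 1
    ring
  refine ⟨hanti, hpos, hlim, hratio, ssp_of_ratio a hanti hpos hlim hratio, fun k hk => ?_⟩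
  refine ⟨(k + 1) ^ 2, by nlinarith, ?_⟩
  have hk' : (1 : ℝ) ≤ k := by exact_mod_cast hk
  have hsqrt : √(((k + 1) ^ 2 : ℕ) : ℝ) = k + 1 := by
    push_cast
    exact Real.sqrt_sq (by positivity)
  have hone : (1 : ℝ) < (((k + 1) ^ 2 : ℕ) : ℝ) := by
    push_cast
    nlinarith
  simp only [a]
  rw [hsqrt, one_div, ← Real.rpow_natCast _ k, ← Real.rpow_neg (by linarith)]
  exact Real.rpow_lt_rpow_of_exponent_lt hone (by linarith)
end

section
/- There exists a strictly decreasing sequence (a_m) of positive real numbers tending to 0 such that 1/m² ≤ a_m ≤ 1/m for all m ≥ 2 (hence (a_m) is polynomially bounded), but the ratio a_m/a_{m+1} does not tend to 1 as m → ∞, so the subset {a_m : m ∈ ℕ} of ℝ does not satisfy condition (SSP) at 0. -/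
/-!
The sequence has a gap of ratio about `2` at every power of two: for `2 ^ k ≤ m < 2 ^ (k + 1)` put
`a_m = (1 + 1 / m) / 2 ^ (k + 1)`. The bounds `1 / m ^ 2 ≤ a_m ≤ 1 / m` amount to
`2 ^ (k + 1) ≤ m (m + 1)` and `m + 1 ≤ 2 ^ (k + 1)`, both immediate from the choice of `k`.
For `n = 2 ^ (j + 2)` one has `a_m ≥ 1 / n` when `m < n` (`one_div_le_gapSeq`) and
`a_m ≤ (5 / 8) / n` when `m ≥ n` (`gapSeq_le`). Hence `a_{n-1} / a_n ≥ 8 / 5` for infinitely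
many `n`, and the points `(3 / 4) / n`, which tend to `0` in the direction `1` of the sequence, stay
at relative distance at least `1 / 6` from it, so (SSP) fails.
-/

open Filter Topology Set

/-- The sequence `(1 + 1 / m) / 2 ^ (k + 1)`, where `2 ^ k ≤ m < 2 ^ (k + 1)`. The value `2` at
`m = 0` only serves to make the sequence strictly decreasing from the start. -/
noncomputable def gapSeq (m : ℕ) : ℝ :=
  if m = 0 then 2 else (1 + 1 / (m : ℝ)) / 2 ^ (Nat.log 2 m + 1)

lemma gapSeq_of_pos {m : ℕ} (hm : 0 < m) :
    gapSeq m = (1 + 1 / (m : ℝ)) / 2 ^ (Nat.log 2 m + 1) := by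
  simp [gapSeq, hm.ne']

lemma gapSeq_pos (m : ℕ) : 0 < gapSeq m := by
  unfold gapSeq
  split_ifs <;> positivity

lemma gapSeq_strictAnti : StrictAnti gapSeq := by
  refine strictAnti_nat_of_succ_lt fun m => ?_
  rcases Nat.eq_zero_or_pos m with rfl | hm
  · norm_num [gapSeq]
  rw [gapSeq_of_pos hm, gapSeq_of_pos m.succ_pos]
  have hm' : (0 : ℝ) < m := by exact_mod_cast hm
  have h1 : (2 : ℝ) ^ (Nat.log 2 m + 1) ≤ 2 ^ (Nat.log 2 (m + 1) + 1) :=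
    pow_le_pow_right₀ one_le_two (Nat.succ_le_succ (Nat.log_mono_right m.le_succ))
  have h2 : 1 / ((m + 1 : ℕ) : ℝ) < 1 / (m : ℝ) :=
    one_div_lt_one_div_of_lt hm' (by push_cast; linarith)
  exact div_lt_div₀ (by linarith) h1 (by positivity) (by positivity)

lemma gapSeq_le_one_div {m : ℕ} (hm : 0 < m) : gapSeq m ≤ 1 / (m : ℝ) := by
  have hm' : (0 : ℝ) < m := by exact_mod_cast hm
  have h : (m : ℝ) + 1 ≤ 2 ^ (Nat.log 2 m + 1) := by
    exact_mod_cast Nat.lt_pow_succ_log_self one_lt_two m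
  rw [gapSeq_of_pos hm, div_le_iff₀ (by positivity)]
  calc 1 + 1 / (m : ℝ) = 1 / m * (m + 1) := by field_simp
    _ ≤ _ := by gcongr

lemma one_div_sq_le_gapSeq {m : ℕ} (hm : 0 < m) : 1 / (m : ℝ) ^ 2 ≤ gapSeq m := by
  have hm' : (1 : ℝ) ≤ m := by exact_mod_cast hm
  have h : (2 : ℝ) ^ Nat.log 2 m ≤ m := by
    exact_mod_cast Nat.pow_log_le_self 2 hm.ne'
  have h2 : (2 : ℝ) ^ (Nat.log 2 m + 1) ≤ m * (m + 1) := by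
    rw [pow_succ]; nlinarith
  rw [gapSeq_of_pos hm, le_div_iff₀ (by positivity)]
  calc 1 / (m : ℝ) ^ 2 * 2 ^ (Nat.log 2 m + 1) ≤ 1 / (m : ℝ) ^ 2 * (m * (m + 1)) := by gcongr
    _ = _ := by field_simp

lemma gapSeq_tendsto : Tendsto gapSeq atTop (𝓝 0) := by
  refine squeeze_zero' (Eventually.of_forall fun m => (gapSeq_pos m).le) ?_
    tendsto_one_div_atTop_nhds_zero_nat
  filter_upwards [eventually_gt_atTop 0] with m hm using gapSeq_le_one_div hm

/-- Terms before a power of two lie above the gap. -/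
lemma one_div_le_gapSeq {m j : ℕ} (h : m < 2 ^ (j + 2)) : 1 / (2 : ℝ) ^ (j + 2) ≤ gapSeq m := by
  rcases Nat.eq_zero_or_pos m with rfl | hm
  · have h1 : (1 : ℝ) ≤ 2 ^ (j + 2) := one_le_pow₀ one_le_two
    have h2 : 1 / (2 : ℝ) ^ (j + 2) ≤ 1 := (div_le_one (by positivity)).2 h1
    have h3 : gapSeq 0 = 2 := by simp [gapSeq]
    linarith
  rw [gapSeq_of_pos hm]
  have h1 : (2 : ℝ) ^ (Nat.log 2 m + 1) ≤ 2 ^ (j + 2) :=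
    pow_le_pow_right₀ one_le_two (Nat.log_lt_of_lt_pow hm.ne' h)
  have h2 : (0 : ℝ) ≤ 1 / (m : ℝ) := by positivity
  exact div_le_div₀ (by positivity) (by linarith) (by positivity) h1

/-- Terms from a power of two on lie below the gap. -/
lemma gapSeq_le {m j : ℕ} (h : 2 ^ (j + 2) ≤ m) : gapSeq m ≤ 5 / 8 / (2 : ℝ) ^ (j + 2) := by
  refine (gapSeq_strictAnti.antitone h).trans ?_
  rw [gapSeq_of_pos (by positivity), Nat.log_pow one_lt_two, pow_succ (2 : ℝ) (j + 2)]
  have h1 : (4 : ℝ) ≤ 2 ^ (j + 2) := by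
    have : (1 : ℝ) ≤ 2 ^ j := one_le_pow₀ one_le_two
    rw [pow_add]; linarith
  push_cast
  have h2 : 1 / (2 : ℝ) ^ (j + 2) ≤ 1 / 4 := one_div_le_one_div_of_le (by norm_num) h1
  rw [mul_comm, ← div_div]
  exact div_le_div_of_nonneg_right (by linarith) (by positivity)

lemma gapSeq_ratio : ¬ Tendsto (fun m => gapSeq m / gapSeq (m + 1)) atTop (𝓝 1) := by
  intro h
  obtain ⟨N, hN⟩ := eventually_atTop.1 (h.eventually_lt_const (by norm_num : (1 : ℝ) < 8 / 5))
  have hlt : N + 2 < 2 ^ (N + 2) := Nat.lt_two_pow_self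
  have h1 := hN (2 ^ (N + 2) - 1) (by omega)
  rw [Nat.sub_add_cancel (by omega), div_lt_iff₀ (gapSeq_pos _)] at h1
  have h2 := one_div_le_gapSeq (m := 2 ^ (N + 2) - 1) (j := N) (by omega)
  have h3 := gapSeq_le (le_refl (2 ^ (N + 2)))
  rw [div_div, mul_comm, ← div_div] at h3
  have h4 : 8 / 5 * (5 / (2 : ℝ) ^ (N + 2) / 8) = 1 / 2 ^ (N + 2) := by ring
  linarith

lemma gapSeq_not_ssp : ¬ SSP (Set.range gapSeq) := by
  intro h
  have hunit : ∀ x : ℝ, 0 < x → (‖x‖)⁻¹ • x = 1 := fun x hx => by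
    rw [Real.norm_of_nonneg hx.le, smul_eq_mul, inv_mul_cancel₀ hx.ne']
  have hp : ∀ j : ℕ, (0 : ℝ) < 3 / 4 / 2 ^ (j + 2) := fun j => by positivity
  have hlim : Tendsto (fun j : ℕ => (3 : ℝ) / 4 / 2 ^ (j + 2)) atTop (𝓝 0) :=
    ((tendsto_pow_atTop_atTop_of_one_lt one_lt_two).comp
      (tendsto_add_atTop_nat 2)).const_div_atTop _
  obtain ⟨b, hb, hb0⟩ := h (fun j => 3 / 4 / 2 ^ (j + 2)) (fun j => (hp j).ne') hlim
    ⟨1, ⟨norm_one, gapSeq, fun i => ⟨⟨i, rfl⟩, (gapSeq_pos i).ne'⟩, gapSeq_tendsto,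
      by simp only [hunit _ (gapSeq_pos _)]; exact tendsto_const_nhds⟩,
      by simp only [hunit _ (hp _)]; exact tendsto_const_nhds⟩
  obtain ⟨j, hj⟩ := (hb0.eventually_lt_const (by norm_num : (0 : ℝ) < 1 / 6)).exists
  obtain ⟨m, hm⟩ := hb j
  rw [← hm, div_lt_iff₀ (norm_pos_iff.2 (hp j).ne'), Real.norm_of_nonneg (hp j).le,
    Real.norm_eq_abs, abs_lt] at hj
  have e1 : (3 : ℝ) / 4 / 2 ^ (j + 2) = 3 / 4 * (1 / 2 ^ (j + 2)) := by ring
  have e2 : (5 : ℝ) / 8 / 2 ^ (j + 2) = 5 / 8 * (1 / 2 ^ (j + 2)) := by ring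
  have hpos : (0 : ℝ) < 1 / 2 ^ (j + 2) := by positivity
  rw [e1] at hj
  rcases lt_or_ge m (2 ^ (j + 2)) with hlt | hge
  · have := one_div_le_gapSeq hlt
    linarith [hj.1]
  · have := gapSeq_le hge
    rw [e2] at this
    linarith [hj.2]

/-- there is a strictly decreasing positive null sequence with
`1/m² ≤ a_m ≤ 1/m` for `m ≥ 2` (hence polynomially bounded) whose ratio `a_m/a_{m+1}`
does not tend to `1`, and whose range does not satisfy (SSP) at `0`. -/
theorem exists_polyBounded_not_ssp :
    ∃ a : ℕ → ℝ, StrictAnti a ∧ (∀ m, 0 < a m) ∧ Tendsto a atTop (𝓝 0) ∧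
      (∀ m : ℕ, 2 ≤ m → 1 / (m : ℝ) ^ 2 ≤ a m ∧ a m ≤ 1 / (m : ℝ)) ∧
      ¬ Tendsto (fun m => a m / a (m + 1)) atTop (𝓝 1) ∧
      ¬ SSP (Set.range a) := by
  exact ⟨gapSeq, gapSeq_strictAnti, gapSeq_pos, gapSeq_tendsto,
    fun m hm => ⟨one_div_sq_le_gapSeq (by omega), gapSeq_le_one_div (by omega)⟩,
    gapSeq_ratio, gapSeq_not_ssp⟩
end

section
/- Let A ⊆ ℝⁿ with 0 ∈ closure(A). Then the tangent cone LD(A) := L(D(A)) satisfies condition (SSP) at 0. -/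
/-!
If `v` is a direction of the cone `LD A`, realised by points `x i = t i • w i` with `w i ∈ dirSet A`
and `t i > 0`, then normalizing `x i` gives back `w i`, so `w i → v`. Given `a m → 0` with
`a m / ‖a m‖ → v`, the points `b m = ‖a m‖ • w m` lie in the cone `LD A`, and
`‖a m - b m‖ / ‖a m‖ = ‖a m / ‖a m‖ - w m‖ → ‖v - v‖ = 0`. Since the approximating directions `w m`
are used instead of `v` itself, closedness of `dirSet A` is not needed.
-/


open Filter Topology Set

/-- Normalizing a nonzero point on the ray spanned by a unit vector recovers that vector. -/
theorem inv_norm_smul_of_ray {E : Type*} [NormedAddCommGroup E] [NormedSpace ℝ E]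
    {w : E} (hw : ‖w‖ = 1) {t : ℝ} (ht : 0 ≤ t) (hne : t • w ≠ 0) :
    (‖t • w‖)⁻¹ • (t • w) = w := by
  have ht0 : t ≠ 0 := fun h => hne (by simp [h])
  rw [norm_smul, hw, mul_one, Real.norm_of_nonneg ht, smul_smul, inv_mul_cancel₀ ht0, one_smul]

/-- the tangent cone `LD(A)` of any set-germ `A` at `0` satisfies (SSP). -/
theorem LD_ssp {n : ℕ} (A : Set (EuclideanSpace ℝ (Fin n)))
    (hA : (0 : EuclideanSpace ℝ (Fin n)) ∈ closure A) :
    SSP (LD A) := by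
  rintro a ha0 - ⟨v, ⟨-, x, hx, -, hxv⟩, hav⟩
  choose w hw t ht hxt using fun i => (hx i).1
  have hwx : ∀ i, (‖x i‖)⁻¹ • x i = w i := fun i => by
    have hne : t i • w i ≠ 0 := hxt i ▸ (hx i).2
    rw [hxt i]
    exact inv_norm_smul_of_ray (hw i).1 (ht i) hne
  simp only [hwx] at hxv
  refine ⟨fun m => ‖a m‖ • w m, fun m => ⟨w m, hw m, ‖a m‖, norm_nonneg _, rfl⟩, ?_⟩
  have hlim : Tendsto (fun m => ‖(‖a m‖)⁻¹ • a m - w m‖) atTop (𝓝 0) := by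
    simpa using (hav.sub hxv).norm
  refine hlim.congr fun m => ?_
  have hm : ‖a m‖ ≠ 0 := norm_ne_zero_iff.mpr (ha0 m)
  have hfactor : (‖a m‖)⁻¹ • a m - w m = (‖a m‖)⁻¹ • (a m - ‖a m‖ • w m) := by
    rw [smul_sub, smul_smul, inv_mul_cancel₀ hm, one_smul]
  rw [hfactor, norm_smul, norm_inv, norm_norm, div_eq_inv_mul]
end

section
/- Let A₁, …, A_k ⊆ ℝⁿ be finitely many sets, each with 0 ∈ closure(A_i) and each satisfying condition (SSP) at 0. Then the union A = A₁ ∪ ⋯ ∪ A_k satisfies condition (SSP) at 0. -/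
/-!
A direction of a finite union is a direction of one of the pieces: a sequence in the union that
realises it visits some piece infinitely often by the pigeonhole principle, and the corresponding
subsequence realises the same direction inside that piece (`dirSet_iUnion_subset`). Condition (SSP)
of that single piece then supplies the approximating sequence, which also lies in the union.
-/

open Filter Topology Set

lemma dirSet_iUnion_subset {E ι : Type*} [NormedAddCommGroup E] [NormedSpace ℝ E] [Finite ι]
    (A : ι → Set E) : dirSet (⋃ i, A i) ⊆ ⋃ i, dirSet (A i) := by
  rintro v ⟨hv, x, hx, hx0, hxv⟩
  have hfreq : ∃ᶠ m in atTop, ∃ i, x m ∈ A i :=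
    Frequently.of_forall fun m => mem_iUnion.1 (hx m).1
  obtain ⟨i, hi⟩ := Filter.frequently_exists.1 hfreq
  obtain ⟨φ, hφ, hφA⟩ := extraction_of_frequently_atTop hi
  exact mem_iUnion.2 ⟨i, hv, x ∘ φ, fun m => ⟨hφA m, (hx (φ m)).2⟩,
    hx0.comp hφ.tendsto_atTop, hxv.comp hφ.tendsto_atTop⟩

/-- a finite union of sets satisfying (SSP) at `0` satisfies (SSP) at `0`. -/
theorem ssp_finite_union {n k : ℕ} (A : Fin k → Set (EuclideanSpace ℝ (Fin n)))
    (hcl : ∀ i, (0 : EuclideanSpace ℝ (Fin n)) ∈ closure (A i))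
    (hssp : ∀ i, SSP (A i)) :
    SSP (⋃ i, A i) := by
  rintro a ha ha0 ⟨v, hv, hav⟩
  obtain ⟨i, hi⟩ := mem_iUnion.1 (dirSet_iUnion_subset A hv)
  obtain ⟨b, hb, hab⟩ := hssp i a ha ha0 ⟨v, hi, hav⟩
  exact ⟨b, fun m => mem_iUnion.2 ⟨i, hb m⟩, hab⟩
end

section
/- Let A, B ⊆ ℝⁿ with 0 ∈ closure(A) ∩ closure(B), and assume LD(A) ∩ LD(B) = {0}. Then A ∪ B satisfies condition (SSP) at 0 if and only if both A and B satisfy condition (SSP) at 0. -/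
/-!
The direction set is additive, `D(A ∪ B) = D(A) ∪ D(B)`, because a sequence in `A ∪ B` is frequently
in one of the two sets (`dirSet_union`). This gives (SSP) for `A ∪ B` from (SSP) for `A` and `B`,
without any hypothesis on the cones.

Conversely, let `a` be a sequence with limit direction `v ∈ D(A)`, and let `b` be the sequence in
`A ∪ B` given by (SSP) for the union. Since `‖a - b‖ = o(‖a‖)`, the sequence `b` tends to `0`, is
eventually nonzero, and has the same limit direction `v` (`tendsto_of_relative_error`). If `b` were
frequently in `B`, then `v` would lie in `D(B)`; but the cone hypothesis says that `D(A)` and `D(B)`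
are disjoint. So `b` is eventually in `A`, and its first terms can be replaced by any point of `A`.
-/


open Filter Topology Set

section

variable {E : Type*} [NormedAddCommGroup E] [NormedSpace ℝ E]

lemma dirSet_mono {A B : Set E} (h : A ⊆ B) : dirSet A ⊆ dirSet B := by
  rintro v ⟨hv, x, hx, hx0, hxv⟩
  exact ⟨hv, x, fun i => ⟨h (hx i).1, (hx i).2⟩, hx0, hxv⟩

lemma mem_dirSet_of_frequently {A : Set E} {v : E} {x : ℕ → E} (hv : ‖v‖ = 1)
    (hx : ∃ᶠ i in atTop, x i ∈ A \ {0}) (hx0 : Tendsto x atTop (𝓝 0))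
    (hxv : Tendsto (fun i => (‖x i‖)⁻¹ • x i) atTop (𝓝 v)) : v ∈ dirSet A := by
  obtain ⟨φ, hφ, hφA⟩ := extraction_of_frequently_atTop hx
  exact ⟨hv, x ∘ φ, hφA, hx0.comp hφ.tendsto_atTop, hxv.comp hφ.tendsto_atTop⟩

lemma dirSet_union (A B : Set E) : dirSet (A ∪ B) = dirSet A ∪ dirSet B := by
  refine Subset.antisymm ?_
    (union_subset (dirSet_mono subset_union_left) (dirSet_mono subset_union_right))
  rintro v ⟨hv, x, hx, hx0, hxv⟩
  have hfreq : ∃ᶠ i in atTop, x i ∈ A \ {0} ∨ x i ∈ B \ {0} :=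
    Frequently.of_forall fun i => (hx i).1.imp (⟨·, (hx i).2⟩) (⟨·, (hx i).2⟩)
  exact (frequently_or_distrib.1 hfreq).imp (mem_dirSet_of_frequently hv · hx0 hxv)
    (mem_dirSet_of_frequently hv · hx0 hxv)

/-- A perturbation of relative size `o(1)` of a sequence tending to `0` again tends to `0`, is
eventually nonzero, and has the same limit direction. All three facts are read off the
rescaled sequence `b m / ‖a m‖`, which tends to `v`. -/
lemma tendsto_of_relative_error {a b : ℕ → E} {v : E} (hv : ‖v‖ = 1) (ha : ∀ m, a m ≠ 0)
    (ha0 : Tendsto a atTop (𝓝 0)) (hav : Tendsto (fun m => (‖a m‖)⁻¹ • a m) atTop (𝓝 v))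
    (hab : Tendsto (fun m => ‖a m - b m‖ / ‖a m‖) atTop (𝓝 0)) :
    Tendsto b atTop (𝓝 0) ∧ (∀ᶠ m in atTop, b m ≠ 0) ∧
      Tendsto (fun m => (‖b m‖)⁻¹ • b m) atTop (𝓝 v) := by
  have hv0 : v ≠ 0 := norm_ne_zero_iff.1 (by simp [hv])
  have herr : Tendsto (fun m => (‖a m‖)⁻¹ • (a m - b m)) atTop (𝓝 0) := by
    refine tendsto_zero_iff_norm_tendsto_zero.2 (hab.congr fun m => ?_)
    rw [norm_smul, norm_inv, norm_norm, div_eq_inv_mul]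
  have hc : Tendsto (fun m => (‖a m‖)⁻¹ • b m) atTop (𝓝 v) := by
    have h := hav.sub herr
    rw [sub_zero] at h
    exact h.congr fun m => by rw [← smul_sub, sub_sub_cancel]
  have hna : ∀ m, ‖a m‖ ≠ 0 := fun m => norm_ne_zero_iff.2 (ha m)
  refine ⟨?_, ?_, ?_⟩
  · have h := ha0.norm.smul hc
    rw [norm_zero, zero_smul] at h
    exact h.congr fun m => smul_inv_smul₀ (hna m) _
  · filter_upwards [hc.eventually_ne hv0] with m hm h
    simp [h] at hm
  · have h := (hc.norm.inv₀ (by simp [hv])).smul hc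
    rw [hv, inv_one, one_smul] at h
    refine h.congr fun m => ?_
    rw [norm_smul, norm_inv, norm_norm, smul_smul]
    congr 1
    rw [mul_inv, inv_inv, mul_right_comm, mul_inv_cancel₀ (hna m), one_mul]

lemma SSP.union {A B : Set E} (hA : SSP A) (hB : SSP B) : SSP (A ∪ B) := by
  rintro a ha ha0 ⟨v, hv, hav⟩
  rw [dirSet_union] at hv
  rcases hv with hv | hv
  · obtain ⟨b, hb, hab⟩ := hA a ha ha0 ⟨v, hv, hav⟩
    exact ⟨b, fun m => Or.inl (hb m), hab⟩
  · obtain ⟨b, hb, hab⟩ := hB a ha ha0 ⟨v, hv, hav⟩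
    exact ⟨b, fun m => Or.inr (hb m), hab⟩

lemma SSP.of_union_left {A B : Set E} (h : SSP (A ∪ B)) (hne : A.Nonempty)
    (hdisj : Disjoint (dirSet A) (dirSet B)) : SSP A := by
  classical
  rintro a ha ha0 ⟨v, hv, hav⟩
  obtain ⟨b, hb, hab⟩ := h a ha ha0 ⟨v, dirSet_mono subset_union_left hv, hav⟩
  obtain ⟨hb0, hbne, hbv⟩ := tendsto_of_relative_error hv.1 ha ha0 hav hab
  have hbA : ∀ᶠ m in atTop, b m ∈ A := by
    by_contra hcon
    refine disjoint_left.1 hdisj hv (mem_dirSet_of_frequently hv.1 ?_ hb0 hbv)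
    exact ((not_eventually.1 hcon).and_eventually hbne).mono
      fun m hm => ⟨(hb m).resolve_left hm.1, hm.2⟩
  obtain ⟨p, hp⟩ := hne
  refine ⟨fun m => if b m ∈ A then b m else p, fun m => ?_, hab.congr' ?_⟩
  · dsimp only
    split_ifs with hm
    exacts [hm, hp]
  · filter_upwards [hbA] with m hm
    rw [if_pos hm]

lemma dirSet_subset_LD (A : Set E) : dirSet A ⊆ LD A :=
  fun v hv => ⟨v, hv, 1, zero_le_one, (one_smul ℝ v).symm⟩

lemma disjoint_dirSet {A B : Set E} (h : LD A ∩ LD B = {0}) :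
    Disjoint (dirSet A) (dirSet B) := by
  refine disjoint_left.2 fun v hvA hvB => ?_
  have hv0 : v ∈ ({0} : Set E) := h ▸ ⟨dirSet_subset_LD A hvA, dirSet_subset_LD B hvB⟩
  have hv := hvA.1
  simp [mem_singleton_iff.1 hv0] at hv

end

/-- if `LD(A) ∩ LD(B) = {0}` then `A ∪ B` satisfies (SSP) at `0`
iff both `A` and `B` do. -/
theorem ssp_union_iff_of_LD_inter_zero {n : ℕ} (A B : Set (EuclideanSpace ℝ (Fin n)))
    (hA : (0 : EuclideanSpace ℝ (Fin n)) ∈ closure A)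
    (hB : (0 : EuclideanSpace ℝ (Fin n)) ∈ closure B)
    (hcap : LD A ∩ LD B = {0}) :
    SSP (A ∪ B) ↔ SSP A ∧ SSP B := by
  have hdisj := disjoint_dirSet hcap
  refine ⟨fun h => ⟨?_, ?_⟩, fun h => h.1.union h.2⟩
  · exact h.of_union_left (closure_nonempty_iff.1 ⟨0, hA⟩) hdisj
  · rw [union_comm] at h
    exact h.of_union_left (closure_nonempty_iff.1 ⟨0, hB⟩) hdisj.symm
end

section
/- Let A, B ⊆ ℝⁿ with 0 ∈ closure(A) ∩ closure(B), and suppose both A and B satisfy condition (SSP) at 0. Suppose there is a bijection φ : A → B which is bi-Lipschitz (i.e. (1/L)‖x − y‖ ≤ ‖φ(x) − φ(y)‖ ≤ L‖x − y‖ on A for some L ≥ 1) and such that for sequences x_i ∈ A one has x_i → 0 if and only if φ(x_i) → 0. Then the tangent cones LD(A) and LD(B) are bi-Lipschitz homeomorphic: there exists a bi-Lipschitz bijection from LD(A) onto LD(B). -/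
/-!
The bi-Lipschitz map between the tangent cones is a blow-up of `φ`. A point `x` of `LD A` is a
limit of `(m + 1) • a m` with `a m ∈ A`: apply (SSP) to `x / (m + 1)`, or `0 ∈ closure A` if `x = 0`
(`exists_seq_of_mem_LD`). Since `0 ∈ closure A` and `φ` preserves convergence to `0`, letting one
point of the Lipschitz estimates tend to `0` gives `‖a‖ / L ≤ ‖φ a‖ ≤ L ‖a‖` on `A`. Hence
`(m + 1) • φ (a m)` is bounded and converges along a fixed nonprincipal ultrafilter. The ultrafilter
replaces a diagonal Arzelà–Ascoli extraction: it makes all of these limits exist simultaneously.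

The pairs `(x, z)` of limits obtained in this way satisfy the Lipschitz estimates with the same
constant `L`, so they form the graph of a bi-Lipschitz map. Limits of rescaled sequences in a set
lie in its tangent cone, except possibly for the limit `0` (`mem_LD_of_tendsto`), so this map sends
`LD A` to `LD B`. Starting instead from a sequence in `B` shows that every point of `LD B` is
attained.
-/

open Filter Topology Set

section

variable {E : Type*} [NormedAddCommGroup E] [NormedSpace ℝ E]

lemma zero_mem_LD_of_mem {A : Set E} {x : E} (hx : x ∈ LD A) : (0 : E) ∈ LD A := by
  obtain ⟨a, ha, t, ht, rfl⟩ := hx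
  exact ⟨a, ha, 0, le_rfl, by simp⟩

lemma exists_ne_zero_mem_LD {A : Set E} {x : E} (hx : x ∈ LD A) : ∃ v ∈ LD A, v ≠ 0 := by
  obtain ⟨a, ha, t, ht, rfl⟩ := hx
  refine ⟨a, ⟨a, ha, 1, zero_le_one, by simp⟩, ?_⟩
  have h1 := ha.1
  rintro rfl
  simp at h1

/-- Under (SSP), a point of the tangent cone is a limit of `(m + 1) • b m` for the full sequence of
scales `m + 1`; membership in `LD A` alone only provides some sequence of scales. -/
lemma exists_seq_of_mem_LD {A : Set E} (h0 : (0 : E) ∈ closure A) (hA : SSP A) {x : E}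
    (hx : x ∈ LD A) :
    ∃ b : ℕ → E, (∀ m, b m ∈ A) ∧ Tendsto (fun m : ℕ => ((m : ℝ) + 1) • b m) atTop (𝓝 x) := by
  by_cases hx0 : x = 0
  · subst hx0
    have hsq : ∀ m : ℕ, ∃ b ∈ A, ‖b‖ < (((m : ℝ) + 1) ^ 2)⁻¹ := by
      intro m
      obtain ⟨b, hb, hd⟩ := Metric.mem_closure_iff.1 h0 (((m : ℝ) + 1) ^ 2)⁻¹ (by positivity)
      exact ⟨b, hb, by simpa using hd⟩
    choose b hbA hb using hsq
    refine ⟨b, hbA, ?_⟩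
    refine squeeze_zero_norm (fun m => ?_) tendsto_one_div_add_atTop_nhds_zero_nat
    have hm : (0 : ℝ) < (m : ℝ) + 1 := by positivity
    rw [norm_smul, Real.norm_of_nonneg hm.le]
    calc ((m : ℝ) + 1) * ‖b m‖ ≤ ((m : ℝ) + 1) * (((m : ℝ) + 1) ^ 2)⁻¹ := by
          gcongr
          exact (hb m).le
      _ = 1 / ((m : ℝ) + 1) := by field_simp
  · obtain ⟨v, hv, t, ht, hxv⟩ := hx
    have ht0 : 0 < t := lt_of_le_of_ne ht (by rintro rfl; simp at hxv; exact hx0 hxv)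
    have hxn : ‖x‖ = t := by rw [hxv, norm_smul, hv.1, Real.norm_of_nonneg ht, mul_one]
    have hnorm : ∀ m : ℕ, ‖((m : ℝ) + 1)⁻¹ • x‖ = ((m : ℝ) + 1)⁻¹ * t := by
      intro m
      rw [norm_smul, hxn, Real.norm_of_nonneg (by positivity)]
    obtain ⟨b, hbA, hb⟩ := hA (fun m : ℕ => ((m : ℝ) + 1)⁻¹ • x)
      (fun m => smul_ne_zero (by positivity) hx0)
      (by
        have := (tendsto_one_div_add_atTop_nhds_zero_nat (𝕜 := ℝ)).smul_const x
        simpa using this)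
      ⟨v, hv, by
        refine tendsto_const_nhds.congr (fun m => ?_)
        have hm : (0 : ℝ) < (m : ℝ) + 1 := by positivity
        rw [hnorm, hxv, smul_smul, smul_smul]
        have : (((m : ℝ) + 1)⁻¹ * t)⁻¹ * (((m : ℝ) + 1)⁻¹ * t) = 1 :=
          inv_mul_cancel₀ (by positivity)
        rw [mul_assoc, this, one_smul]⟩
    refine ⟨b, hbA, ?_⟩
    rw [tendsto_iff_norm_sub_tendsto_zero]
    have h2 := hb.mul_const t
    rw [zero_mul] at h2
    refine h2.congr (fun m => ?_)
    have hm : (0 : ℝ) < (m : ℝ) + 1 := by positivity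
    have h3 : ((m : ℝ) + 1) • b m - x = -(((m : ℝ) + 1) • (((m : ℝ) + 1)⁻¹ • x - b m)) := by
      rw [smul_sub, smul_inv_smul₀ hm.ne']
      abel
    rw [hnorm, h3, norm_neg, norm_smul, Real.norm_of_nonneg hm.le]
    field_simp

/-- Nonzero limits of rescaled sequences in `A`, along any nontrivial filter finer than `atTop`,
lie in the tangent cone. -/
lemma mem_LD_of_tendsto {A : Set E} {U : Filter ℕ} [U.NeBot] (hU : U ≤ atTop) {c : ℕ → E}
    (hc : ∀ m, c m ∈ A) {z : E} (hz : z ≠ 0)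
    (h : Tendsto (fun m : ℕ => ((m : ℝ) + 1) • c m) U (𝓝 z)) : z ∈ LD A := by
  obtain ⟨ψ, hψ, hlim⟩ := MapClusterPt.tendsto_subseq
    (h.mapClusterPt.mono hU)
  obtain ⟨N, hN⟩ := eventually_atTop.1 (hlim.eventually_ne hz)
  have hlim' := hlim.comp (tendsto_add_atTop_nat N)
  have hzn : ‖z‖ ≠ 0 := norm_ne_zero_iff.2 hz
  refine ⟨‖z‖⁻¹ • z, ⟨?_, fun k => c (ψ (k + N)), fun k => ⟨hc _, ?_⟩, ?_, ?_⟩, ‖z‖,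
    norm_nonneg z, ?_⟩
  · rw [norm_smul, norm_inv, norm_norm, inv_mul_cancel₀ hzn]
  · intro h0
    have h0' : c (ψ (k + N)) = 0 := h0
    exact hN (k + N) (Nat.le_add_left _ _) (by simp [h0'])
  · have hs : Tendsto (fun k => 1 / ((ψ (k + N) : ℝ) + 1)) atTop (𝓝 0) :=
      (tendsto_one_div_add_atTop_nhds_zero_nat (𝕜 := ℝ)).comp
        (hψ.tendsto_atTop.comp (tendsto_add_atTop_nat N))
    have := hs.smul hlim'
    rw [zero_smul] at this
    refine this.congr (fun k => ?_)
    have hm : (0 : ℝ) < (ψ (k + N) : ℝ) + 1 := by positivity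
    simp only [Function.comp_apply]
    rw [smul_smul, one_div, inv_mul_cancel₀ hm.ne', one_smul]
  · refine ((hlim'.norm.inv₀ hzn).smul hlim').congr (fun k => ?_)
    have hm : (0 : ℝ) < (ψ (k + N) : ℝ) + 1 := by positivity
    simp only [Function.comp_apply]
    rw [norm_smul, Real.norm_of_nonneg hm.le, smul_smul]
    congr 1
    field_simp
  · rw [smul_inv_smul₀ hzn]

/-- Rescaled sequences dominated by a convergent one converge along an ultrafilter. -/
lemma exists_tendsto_of_dominated [ProperSpace E] (U : Ultrafilter ℕ) {a c : ℕ → E} {x : E}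
    {L : ℝ} (hL : 0 ≤ L) (hac : ∀ m, ‖c m‖ ≤ L * ‖a m‖)
    (h : Tendsto (fun m : ℕ => ((m : ℝ) + 1) • a m) U (𝓝 x)) :
    ∃ z, Tendsto (fun m : ℕ => ((m : ℝ) + 1) • c m) U (𝓝 z) := by
  have hbd : ∀ᶠ m : ℕ in U, ((m : ℝ) + 1) • c m ∈ Metric.closedBall (0 : E) (L * (‖x‖ + 1)) := by
    filter_upwards [h.norm.eventually_lt_const (lt_add_one ‖x‖)] with m hm
    rw [mem_closedBall_zero_iff, norm_smul]
    rw [norm_smul] at hm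
    calc ‖(m : ℝ) + 1‖ * ‖c m‖ ≤ ‖(m : ℝ) + 1‖ * (L * ‖a m‖) := by gcongr; exact hac m
      _ = L * (‖(m : ℝ) + 1‖ * ‖a m‖) := by ring
      _ ≤ L * (‖x‖ + 1) := by gcongr
  obtain ⟨z, -, hz⟩ := (isCompact_closedBall (0 : E) (L * (‖x‖ + 1))).ultrafilter_le_nhds
    (U.map fun m : ℕ => ((m : ℝ) + 1) • c m) (le_principal_iff.2 hbd)
  exact ⟨z, hz⟩

lemma le_of_tendsto_rescaled {U : Filter ℕ} [U.NeBot] {p q : ℕ → E} {x z : E} {L : ℝ}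
    (hp : Tendsto (fun m : ℕ => ((m : ℝ) + 1) • p m) U (𝓝 x))
    (hq : Tendsto (fun m : ℕ => ((m : ℝ) + 1) • q m) U (𝓝 z))
    (h : ∀ m, ‖p m‖ ≤ L * ‖q m‖) : ‖x‖ ≤ L * ‖z‖ := by
  refine le_of_tendsto_of_tendsto' hp.norm (hq.norm.const_mul L) (fun m => ?_)
  rw [norm_smul, norm_smul]
  calc ‖(m : ℝ) + 1‖ * ‖p m‖ ≤ ‖(m : ℝ) + 1‖ * (L * ‖q m‖) := by gcongr; exact h m
    _ = L * (‖(m : ℝ) + 1‖ * ‖q m‖) := by ring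

/-- `BlowUp U A φ x z` says that `z` is an image of `x` under the blow-up of `φ` along `U`: some
sequence `a m` in `A` has `(m + 1) • a m → x` and `(m + 1) • φ (a m) → z`. -/
def BlowUp (U : Filter ℕ) (A : Set E) (φ : E → E) (x z : E) : Prop :=
  ∃ a : ℕ → E, (∀ m, a m ∈ A) ∧ Tendsto (fun m : ℕ => ((m : ℝ) + 1) • a m) U (𝓝 x) ∧
    Tendsto (fun m : ℕ => ((m : ℝ) + 1) • φ (a m)) U (𝓝 z)


end

/-- if `A`, `B` both satisfy (SSP) at `0` and there is a bi-Lipschitz bijection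
`φ : A → B` preserving convergence of sequences to `0`, then `LD(A)` and `LD(B)` are
bi-Lipschitz homeomorphic. -/
theorem tangent_cones_biLipschitz {n : ℕ} (A B : Set (EuclideanSpace ℝ (Fin n)))
    (hA : (0 : EuclideanSpace ℝ (Fin n)) ∈ closure A)
    (hB : (0 : EuclideanSpace ℝ (Fin n)) ∈ closure B)
    (hsspA : SSP A) (hsspB : SSP B)
    (φ : EuclideanSpace ℝ (Fin n) → EuclideanSpace ℝ (Fin n))
    (hbij : Set.BijOn φ A B)
    (L : ℝ) (hL : 1 ≤ L)
    (hbil : ∀ x ∈ A, ∀ y ∈ A,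
      (1 / L) * ‖x - y‖ ≤ ‖φ x - φ y‖ ∧ ‖φ x - φ y‖ ≤ L * ‖x - y‖)
    (hconv : ∀ x : ℕ → EuclideanSpace ℝ (Fin n), (∀ i, x i ∈ A) →
      (Tendsto x atTop (𝓝 0) ↔ Tendsto (fun i => φ (x i)) atTop (𝓝 0))) :
    ∃ (L' : ℝ), 1 ≤ L' ∧ ∃ g : EuclideanSpace ℝ (Fin n) → EuclideanSpace ℝ (Fin n),
      Set.BijOn g (LD A) (LD B) ∧
      ∀ x ∈ LD A, ∀ y ∈ LD A,
        (1 / L') * ‖x - y‖ ≤ ‖g x - g y‖ ∧ ‖g x - g y‖ ≤ L' * ‖x - y‖ := by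
  have hL0 : 0 < L := by linarith
  have hlo : ∀ x ∈ A, ∀ y ∈ A, ‖x - y‖ ≤ L * ‖φ x - φ y‖ := by
    intro x hx y hy
    have := (hbil x hx y hy).1
    rwa [one_div, inv_mul_le_iff₀ hL0] at this
  have hhi : ∀ x ∈ A, ∀ y ∈ A, ‖φ x - φ y‖ ≤ L * ‖x - y‖ := fun x hx y hy => (hbil x hx y hy).2
  -- Letting `y → 0` in the Lipschitz estimates: `φ` behaves as if `0 ∈ A` and `φ 0 = 0`.
  obtain ⟨s, hsA, hs⟩ := mem_closure_iff_seq_limit.1 hA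
  have hφs := (hconv s hsA).1 hs
  have hlo0 : ∀ x ∈ A, ‖x‖ ≤ L * ‖φ x‖ := by
    intro x hx
    have := le_of_tendsto_of_tendsto' ((tendsto_const_nhds (x := x)).sub hs).norm
      (((tendsto_const_nhds (x := φ x)).sub hφs).norm.const_mul L) (fun i => hlo x hx (s i) (hsA i))
    simpa using this
  have hhi0 : ∀ x ∈ A, ‖φ x‖ ≤ L * ‖x‖ := by
    intro x hx
    have := le_of_tendsto_of_tendsto' ((tendsto_const_nhds (x := φ x)).sub hφs).norm
      (((tendsto_const_nhds (x := x)).sub hs).norm.const_mul L) (fun i => hhi x hx (s i) (hsA i))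
    simpa using this
  let U : Ultrafilter ℕ := hyperfilter ℕ
  have hU : (U : Filter ℕ) ≤ atTop := Nat.hyperfilter_le_atTop
  have hRlo0 : ∀ x z, BlowUp U A φ x z → ‖x‖ ≤ L * ‖z‖ := fun x z ⟨a, haA, ha, hc⟩ =>
    le_of_tendsto_rescaled ha hc fun m => hlo0 _ (haA m)
  have hRhi0 : ∀ x z, BlowUp U A φ x z → ‖z‖ ≤ L * ‖x‖ := fun x z ⟨a, haA, ha, hc⟩ =>
    le_of_tendsto_rescaled hc ha fun m => hhi0 _ (haA m)
  have hRlo : ∀ x z x' z', BlowUp U A φ x z → BlowUp U A φ x' z' → ‖x - x'‖ ≤ L * ‖z - z'‖ := by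
    rintro x z x' z' ⟨a, haA, ha, hc⟩ ⟨a', haA', ha', hc'⟩
    refine le_of_tendsto_rescaled (U := U) (p := fun m => a m - a' m) (q := fun m => φ (a m) - φ (a' m))
      ?_ ?_ fun m => hlo _ (haA m) _ (haA' m)
    · simpa only [smul_sub] using ha.sub ha'
    · simpa only [smul_sub] using hc.sub hc'
  have hRhi : ∀ x z x' z', BlowUp U A φ x z → BlowUp U A φ x' z' → ‖z - z'‖ ≤ L * ‖x - x'‖ := by
    rintro x z x' z' ⟨a, haA, ha, hc⟩ ⟨a', haA', ha', hc'⟩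
    refine le_of_tendsto_rescaled (U := U) (p := fun m => φ (a m) - φ (a' m)) (q := fun m => a m - a' m)
      ?_ ?_ fun m => hhi _ (haA m) _ (haA' m)
    · simpa only [smul_sub] using hc.sub hc'
    · simpa only [smul_sub] using ha.sub ha'
  have hzero : ∀ x z, BlowUp U A φ x z → (x = 0 ↔ z = 0) := by
    intro x z h
    constructor
    · rintro rfl
      simpa using hRhi0 _ _ h
    · rintro rfl
      simpa using hRlo0 _ _ h
  have hfwd : ∀ x ∈ LD A, ∃ z, BlowUp U A φ x z := by
    intro x hx
    obtain ⟨a, haA, ha⟩ := exists_seq_of_mem_LD hA hsspA hx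
    obtain ⟨z, hz⟩ := exists_tendsto_of_dominated U (c := fun m => φ (a m)) hL0.le
      (fun m => hhi0 _ (haA m)) (ha.mono_left hU)
    exact ⟨z, a, haA, ha.mono_left hU, hz⟩
  have hbwd : ∀ z ∈ LD B, ∃ x, BlowUp U A φ x z := by
    intro z hz
    obtain ⟨c, hcB, hc⟩ := exists_seq_of_mem_LD hB hsspB hz
    choose a haA hac using fun m => hbij.surjOn (hcB m)
    obtain rfl : (fun m => φ (a m)) = c := funext hac
    obtain ⟨x, hx⟩ := exists_tendsto_of_dominated U (c := a) hL0.le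
      (fun m => hlo0 _ (haA m)) (hc.mono_left hU)
    exact ⟨x, a, haA, hx, hc.mono_left hU⟩
  have hmemB : ∀ x z, BlowUp U A φ x z → x ≠ 0 → z ∈ LD B := by
    rintro x z h hx
    have hz := mt (hzero x z h).2 hx
    obtain ⟨a, haA, -, hc⟩ := h
    exact mem_LD_of_tendsto hU (fun m => hbij.mapsTo (haA m)) hz hc
  have hmemA : ∀ x z, BlowUp U A φ x z → x ≠ 0 → x ∈ LD A := by
    rintro x z ⟨a, haA, ha, -⟩ hx
    exact mem_LD_of_tendsto hU haA hx ha
  choose! g hg using hfwd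
  refine ⟨L, hL, g, ⟨?_, ?_, ?_⟩, ?_⟩
  · intro x hx
    by_cases hx0 : x = 0
    · -- `0 ∈ LD B` holds as soon as `LD B` is nonempty.
      obtain ⟨v, hv, hv0⟩ := exists_ne_zero_mem_LD hx
      rw [(hzero _ _ (hg x hx)).1 hx0]
      exact zero_mem_LD_of_mem (hmemB _ _ (hg v hv) hv0)
    · exact hmemB _ _ (hg x hx) hx0
  · intro x hx y hy hxy
    have := hRlo _ _ _ _ (hg x hx) (hg y hy)
    rw [hxy, sub_self, norm_zero, mul_zero] at this
    exact sub_eq_zero.1 (norm_le_zero_iff.1 this)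
  · intro z hz
    obtain ⟨x, hx⟩ := hbwd z hz
    have hxA : x ∈ LD A := by
      by_cases hx0 : x = 0
      · obtain ⟨w, hw, hw0⟩ := exists_ne_zero_mem_LD hz
        obtain ⟨y, hy⟩ := hbwd w hw
        rw [hx0]
        exact zero_mem_LD_of_mem (hmemA _ _ hy (mt (hzero y w hy).1 hw0))
      · exact hmemA _ _ hx hx0
    refine ⟨x, hxA, ?_⟩
    have := hRhi _ _ _ _ (hg x hxA) hx
    rw [sub_self, norm_zero, mul_zero] at this
    exact sub_eq_zero.1 (norm_le_zero_iff.1 this)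
  · intro x hx y hy
    refine ⟨?_, hRhi _ _ _ _ (hg x hx) (hg y hy)⟩
    rw [one_div, inv_mul_le_iff₀ hL0]
    exact hRlo _ _ _ _ (hg x hx) (hg y hy)
end

section
/- Let A, B ⊆ ℝⁿ with 0 ∈ closure(A) ∩ closure(B), both satisfying condition (SSP) at 0, and let h : ℝⁿ → ℝⁿ be a bi-Lipschitz homeomorphism with h(0) = 0. Then dim_H(D(h(A)) ∩ D(h(B))) ≥ dim_H(D(A) ∩ D(B)), where dim_H denotes Hausdorff dimension. -/
/-!
The blow-ups `x ↦ (k + 1) • h ((k + 1)⁻¹ • x)` of `h` at `0` are uniformly bi-Lipschitz and fix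
`0`, so along a nonprincipal ultrafilter they converge pointwise to a bi-Lipschitz map `g`. If `A`
satisfies (SSP) and `x ≠ 0` points in a direction of `A`, then `(k + 1)⁻¹ • x` is approximated by
points `b k ∈ A` up to `o(1 / k)`; hence `(k + 1) • h (b k)` has the limit `g x` along the
ultrafilter, and `g x` points in a direction of `h '' A` (`direction_blowup_mem`). Thus `g` maps the
cone over `E = D(A) ∩ D(B)` into the cone over `E' = D(h(A)) ∩ D(h(B))`.

It remains to see that passing to the (truncated) cone over a subset of the unit sphere raises
Hausdorff dimension by exactly one. Concretely, for `s > 0`, nullity for the `s`-dimensional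
measure of the base implies nullity for the `(s + 1)`-dimensional measure of the cone
(`cone_null`: cut the cone over a piece of diameter `d` into about `1 / d` pieces of diameter
comparable to `d`), and conversely
(`base_null`: average over the radius the covers of the base induced by a cover of the cone).
For `s > dimH E'`, this gives `μH[s] E' = 0`, so the truncated cone over `E'` is
`μH[s + 1]`-null, so is the one over `E` because `g` is antilipschitz, and so `μH[s] E = 0`.
-/

open Filter Topology Set

open MeasureTheory Measure ENNReal

/-! ### Null sets of Hausdorff measures -/

/-- For `s > 0`, arbitrarily cheap countable covers suffice for nullity: the cost of a cover
controls the size of its pieces, so no separate mesh condition is needed. -/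
lemma hausdorff_null_of_covers {X : Type*} [MetricSpace X] [MeasurableSpace X] [BorelSpace X]
    {s : ℝ} (hs : 0 < s) {S : Set X}
    (H : ∀ ε : ℝ, 0 < ε → ∃ (ι : Type) (_ : Countable ι) (t : ι → Set X) (d : ι → ℝ),
      (∀ i, 0 < d i) ∧ S ⊆ ⋃ i, t i ∧ (∀ i, ∀ x ∈ t i, ∀ y ∈ t i, dist x y ≤ d i) ∧
      ∑' i, ENNReal.ofReal (d i ^ s) ≤ ENNReal.ofReal ε) :
    μH[s] S = 0 := by
  have hpos : ∀ n : ℕ, (0 : ℝ) < 1 / ((n : ℝ) + 1) := fun n => by positivity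
  choose ι hι t d hd hS ht hsum using fun n : ℕ => H (1 / ((n : ℝ) + 1)) (hpos n)
  have hdiam : ∀ n i, Metric.ediam (t n i) ≤ ENNReal.ofReal (d n i) := fun n i =>
    Metric.ediam_le fun x hx y hy => by
      rw [edist_dist]; exact ENNReal.ofReal_le_ofReal (ht n i x hx y hy)
  have hlim : Tendsto (fun n : ℕ => 1 / ((n : ℝ) + 1)) atTop (𝓝 0) :=
    tendsto_one_div_add_atTop_nhds_zero_nat
  have hlimE : Tendsto (fun n : ℕ => ENNReal.ofReal (1 / ((n : ℝ) + 1))) atTop (𝓝 0) := by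
    simpa using ENNReal.tendsto_ofReal hlim
  have hmesh : Tendsto (fun n : ℕ => ENNReal.ofReal ((1 / ((n : ℝ) + 1)) ^ s⁻¹)) atTop (𝓝 0) := by
    have h1 := hlim.rpow_const (p := s⁻¹) (Or.inr (inv_pos.2 hs).le)
    rw [Real.zero_rpow (inv_pos.2 hs).ne'] at h1
    simpa using ENNReal.tendsto_ofReal h1
  have key := hausdorffMeasure_le_liminf_tsum s S (l := atTop)
    (fun n : ℕ => ENNReal.ofReal ((1 / ((n : ℝ) + 1)) ^ s⁻¹)) hmesh t
    (Eventually.of_forall fun n i => (hdiam n i).trans (ENNReal.ofReal_le_ofReal (by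
      have h1 : ENNReal.ofReal (d n i ^ s) ≤ ENNReal.ofReal (1 / ((n : ℝ) + 1)) :=
        (ENNReal.le_tsum i).trans (hsum n)
      rw [ENNReal.ofReal_le_ofReal_iff (hpos n).le] at h1
      calc d n i = (d n i ^ s) ^ s⁻¹ := (Real.rpow_rpow_inv (hd n i).le hs.ne').symm
        _ ≤ _ := Real.rpow_le_rpow (Real.rpow_nonneg (hd n i).le _) h1 (inv_pos.2 hs).le)))
    (Eventually.of_forall hS)
  refine le_antisymm (key.trans ?_) zero_le
  rw [← hlimE.liminf_eq]
  refine liminf_le_liminf (Eventually.of_forall fun n => ?_)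
  refine le_trans (ENNReal.tsum_le_tsum fun i => ?_) (hsum n)
  rw [← ENNReal.ofReal_rpow_of_pos (hd n i)]
  exact ENNReal.rpow_le_rpow (hdiam n i) hs.le

/-- A null set has arbitrarily cheap covers. The size `d i` assigned to a piece only bounds
its diameter, which allows `d i > 0` even for one-point pieces. -/
lemma exists_cover_of_hausdorff_null {X : Type*} [MetricSpace X] [MeasurableSpace X]
    [BorelSpace X] {s : ℝ} (hs : 0 < s) {S : Set X} (h : μH[s] S = 0) {ε : ℝ} (hε : 0 < ε) :
    ∃ (t : ℕ → Set X) (d : ℕ → ℝ), (∀ i, 0 < d i) ∧ S ⊆ ⋃ i, t i ∧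
      (∀ i, ∀ x ∈ t i, ∀ y ∈ t i, dist x y ≤ d i) ∧
      ∑' i, ENNReal.ofReal (d i ^ s) ≤ ENNReal.ofReal ε := by
  have hε2 : ENNReal.ofReal (ε / 2) ≠ 0 := by simpa using hε
  rw [hausdorffMeasure_apply] at h
  have h1 : (⨅ (t : ℕ → Set X) (_ : S ⊆ ⋃ n, t n) (_ : ∀ n, Metric.ediam (t n) ≤ 1),
      ∑' n, ⨆ _ : (t n).Nonempty, Metric.ediam (t n) ^ s) < ENNReal.ofReal (ε / 2) := by
    refine lt_of_le_of_lt ?_ (pos_iff_ne_zero.2 hε2)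
    rw [← h]
    exact le_iSup₂_of_le (1 : ℝ≥0∞) one_pos le_rfl
  simp only [iInf_lt_iff] at h1
  obtain ⟨t, hS, hd1, hsum⟩ := h1
  obtain ⟨η, hη, hηsum⟩ := ENNReal.exists_pos_sum_of_countable hε2 ℕ
  have hfin : ∀ i, Metric.ediam (t i) ≠ ∞ := fun i => ((hd1 i).trans_lt one_lt_top).ne
  refine ⟨t, fun i => ((Metric.diam (t i)) ^ s + η i) ^ s⁻¹, fun i => ?_, hS, ?_, ?_⟩
  · have := Real.rpow_nonneg (Metric.diam_nonneg (s := t i)) s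
    have := hη i
    positivity
  · intro i x hx y hy
    have h2 : dist x y ≤ Metric.diam (t i) := Metric.dist_le_diam_of_mem' (hfin i) hx hy
    refine h2.trans ?_
    calc Metric.diam (t i) = (Metric.diam (t i) ^ s) ^ s⁻¹ :=
          (Real.rpow_rpow_inv Metric.diam_nonneg hs.ne').symm
      _ ≤ _ := Real.rpow_le_rpow (Real.rpow_nonneg Metric.diam_nonneg _)
          (le_add_of_nonneg_right (η i).coe_nonneg) (inv_pos.2 hs).le
  · have h3 : ∀ i, ENNReal.ofReal ((((Metric.diam (t i)) ^ s + η i) ^ s⁻¹) ^ s)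
        ≤ (⨆ _ : (t i).Nonempty, Metric.ediam (t i) ^ s) + η i := by
      intro i
      have h4 := Real.rpow_nonneg (Metric.diam_nonneg (s := t i)) s
      rw [Real.rpow_inv_rpow (add_nonneg h4 (η i).coe_nonneg) hs.ne', ENNReal.ofReal_add h4 (η i).coe_nonneg,
        ENNReal.ofReal_coe_nnreal]
      gcongr
      rcases (t i).eq_empty_or_nonempty with he | hne
      · simp [he, Real.zero_rpow hs.ne']
      · refine le_iSup_of_le hne ?_
        rw [← ENNReal.ofReal_rpow_of_nonneg Metric.diam_nonneg hs.le, Metric.diam,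
          ENNReal.ofReal_toReal (hfin i)]
    calc _ ≤ ∑' i, ((⨆ _ : (t i).Nonempty, Metric.ediam (t i) ^ s) + (η i : ℝ≥0∞)) :=
          ENNReal.tsum_le_tsum h3
      _ = _ := ENNReal.tsum_add
      _ ≤ ENNReal.ofReal (ε / 2) + ENNReal.ofReal (ε / 2) := add_le_add hsum.le hηsum.le
      _ = _ := by rw [← ENNReal.ofReal_add (by positivity) (by positivity), add_halves]

/-! ### Hausdorff measure of cones -/

section Cone

variable {E : Type*} [NormedAddCommGroup E] [NormedSpace ℝ E] [MeasurableSpace E] [BorelSpace E]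

/-- The cone over a null set of directions is null one dimension higher. -/
lemma cone_null {s R : ℝ} (hs : 0 < s) (hR : 0 ≤ R) {S : Set E} (hS : ∀ u ∈ S, ‖u‖ = 1)
    (h : μH[s] S = 0) : μH[s + 1] {x : E | ∃ u ∈ S, ∃ r : ℝ, 0 ≤ r ∧ r ≤ R ∧ x = r • u} = 0 := by
  refine hausdorff_null_of_covers (by positivity) fun ε hε => ?_
  set C : ℝ := (R + 1) ^ (s + 1) * (R + 1) with hC
  have hCpos : 0 < C := by positivity
  obtain ⟨t, d, hd, hcov, hdist, hsum⟩ :=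
    exists_cover_of_hausdorff_null hs h (ε := min 1 (ε / C)) (by positivity)
  have hd1 : ∀ i, d i ≤ 1 := fun i => by
    have h1 := (ENNReal.le_tsum i).trans hsum
    rw [ENNReal.ofReal_le_ofReal_iff (by positivity)] at h1
    by_contra! h2
    exact absurd (h1.trans (min_le_left _ _)) (not_le.2 (Real.one_lt_rpow h2 hs))
  -- Piece `(i, k)` consists of the points over `t i` with radius between `k * d i` and
  -- `(k + 1) * d i`.
  refine ⟨Σ i : ℕ, Fin (⌊R / d i⌋₊ + 1), inferInstance,
    fun p => {x | ∃ u ∈ S, u ∈ t p.1 ∧ ∃ r : ℝ, 0 ≤ r ∧ r ≤ R ∧ x = r • u ∧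
      (p.2 : ℝ) * d p.1 ≤ r ∧ r ≤ ((p.2 : ℝ) + 1) * d p.1},
    fun p => (R + 1) * d p.1, fun p => mul_pos (by positivity) (hd _), ?_, ?_, ?_⟩
  · rintro x ⟨u, hu, r, hr0, hrR, rfl⟩
    obtain ⟨i, hi⟩ := mem_iUnion.1 (hcov hu)
    have hk : ⌊r / d i⌋₊ < ⌊R / d i⌋₊ + 1 :=
      Nat.lt_succ_of_le (Nat.floor_le_floor (div_le_div_of_nonneg_right hrR (hd i).le))
    refine mem_iUnion.2 ⟨⟨i, ⟨_, hk⟩⟩, u, hu, hi, r, hr0, hrR, rfl, ?_, ?_⟩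
    · exact (le_div_iff₀ (hd i)).1 (Nat.floor_le (div_nonneg hr0 (hd i).le))
    · exact (div_le_iff₀ (hd i)).1 (Nat.lt_floor_add_one _).le
  · rintro ⟨i, k⟩ x ⟨u, hu, hut, r, hr0, hrR, rfl, hr1, hr2⟩ y ⟨v, hv, hvt, q, hq0, hqR, rfl, hq1, hq2⟩
    have h1 : r • u - q • v = r • (u - v) + (r - q) • v := by
      rw [smul_sub, sub_smul]; abel
    have h2 : |r - q| ≤ d i := by
      rw [abs_le]; constructor <;> simp only [] at * <;> nlinarith
    have h3 : ‖u - v‖ ≤ d i := by rw [← dist_eq_norm]; exact hdist i u hut v hvt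
    rw [dist_eq_norm, h1]
    refine (norm_add_le _ _).trans ?_
    rw [norm_smul, norm_smul, hS v hv, Real.norm_eq_abs, Real.norm_eq_abs, abs_of_nonneg hr0,
      mul_one]
    change _ ≤ (R + 1) * d i
    rw [add_mul, one_mul]
    exact add_le_add (mul_le_mul hrR h3 (norm_nonneg _) hR) h2
  · rw [ENNReal.tsum_sigma']
    have h1 : ∀ i, ∑' _ : Fin (⌊R / d i⌋₊ + 1), ENNReal.ofReal (((R + 1) * d i) ^ (s + 1))
        ≤ ENNReal.ofReal C * ENNReal.ofReal (d i ^ s) := by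
      intro i
      rw [tsum_fintype, Finset.sum_const, Finset.card_univ, Fintype.card_fin, nsmul_eq_mul,
        ← ENNReal.ofReal_natCast, ← ENNReal.ofReal_mul (by positivity),
        ← ENNReal.ofReal_mul hCpos.le]
      refine ENNReal.ofReal_le_ofReal ?_
      have hfl : ((⌊R / d i⌋₊ + 1 : ℕ) : ℝ) * d i ≤ R + 1 := by
        have := (le_div_iff₀ (hd i)).1 (Nat.floor_le (div_nonneg hR (hd i).le))
        push_cast
        nlinarith [hd1 i]
      have hds := Real.rpow_nonneg (hd i).le s
      rw [Real.mul_rpow (by positivity) (hd i).le, Real.rpow_add (hd i), Real.rpow_one]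
      calc _ = (R + 1) ^ (s + 1) * (((⌊R / d i⌋₊ + 1 : ℕ) : ℝ) * d i) * d i ^ s := by ring
        _ ≤ _ := by rw [hC]; gcongr
    calc _ ≤ ∑' i, ENNReal.ofReal C * ENNReal.ofReal (d i ^ s) := ENNReal.tsum_le_tsum h1
      _ = ENNReal.ofReal C * ∑' i, ENNReal.ofReal (d i ^ s) := ENNReal.tsum_mul_left
      _ ≤ ENNReal.ofReal C * ENNReal.ofReal (ε / C) := by
          gcongr; exact hsum.trans (ENNReal.ofReal_le_ofReal (min_le_right _ _))
      _ = ENNReal.ofReal ε := by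
          rw [← ENNReal.ofReal_mul hCpos.le, mul_div_cancel₀ _ hCpos.ne']

/-- If the part of the cone with radius in `[1, 2]` is null, then its base is null one dimension
lower: for every radius, a cover of the cone induces one of the base, and some radius meets
pieces of total cost at most the average. -/
lemma base_null {s : ℝ} (hs : 0 < s) {S : Set E} (hS : ∀ u ∈ S, ‖u‖ = 1)
    (h : μH[s + 1] {x : E | ∃ u ∈ S, ∃ r : ℝ, 1 ≤ r ∧ r ≤ 2 ∧ x = r • u} = 0) :
    μH[s] S = 0 := by
  refine hausdorff_null_of_covers hs fun ε hε => ?_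
  obtain ⟨t, d, hd, hcov, hdist, hsum⟩ :=
    exists_cover_of_hausdorff_null (by positivity) h (ε := ε / 2) (by positivity)
  -- The radii met by the `i`-th piece lie in an interval of length `2 * d i`.
  have hc : ∀ i, ∃ c : ℝ, ∀ x ∈ t i, ‖x‖ ∈ Icc (c - d i) (c + d i) := by
    intro i
    rcases (t i).eq_empty_or_nonempty with he | ⟨y, hy⟩
    · exact ⟨0, by simp [he]⟩
    · refine ⟨‖y‖, fun x hx => ?_⟩
      have h1 := (abs_norm_sub_norm_le x y).trans ((dist_eq_norm x y).symm.le.trans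
        (hdist i x hx y hy))
      rw [abs_le] at h1
      constructor <;> linarith
  choose c hc using hc
  set f : ℝ → ℝ≥0∞ := fun τ =>
    ∑' i, (Icc (c i - d i) (c i + d i)).indicator (fun _ => ENNReal.ofReal (d i ^ s)) τ with hf
  have hfm : Measurable f := Measurable.tsum fun i =>
    measurable_const.indicator measurableSet_Icc
  have hint : ∫⁻ τ in Icc (1 : ℝ) 2, f τ ≤ ENNReal.ofReal ε := by
    refine (setLIntegral_le_lintegral _ _).trans ?_
    rw [hf, lintegral_tsum fun i => (measurable_const.indicator measurableSet_Icc).aemeasurable]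
    have h1 : ∀ i, ∫⁻ τ, (Icc (c i - d i) (c i + d i)).indicator
        (fun _ => ENNReal.ofReal (d i ^ s)) τ = 2 * ENNReal.ofReal (d i ^ (s + 1)) := by
      intro i
      rw [lintegral_indicator_const measurableSet_Icc, Real.volume_Icc,
        ← ENNReal.ofReal_mul (Real.rpow_nonneg (hd i).le _), Real.rpow_add (hd i), Real.rpow_one,
        show (2 : ℝ≥0∞) = ENNReal.ofReal 2 by simp, ← ENNReal.ofReal_mul (by norm_num)]
      congr 1; ring
    simp_rw [h1]
    rw [ENNReal.tsum_mul_left]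
    calc _ ≤ 2 * ENNReal.ofReal (ε / 2) := by gcongr
      _ = ENNReal.ofReal ε := by
        rw [show (2 : ℝ≥0∞) = ENNReal.ofReal 2 by simp, ← ENNReal.ofReal_mul (by norm_num)]
        congr 1; ring
  have hvol : volume (Icc (1 : ℝ) 2) = 1 := by rw [Real.volume_Icc]; norm_num
  obtain ⟨τ, hτ, hfτ⟩ := exists_le_setLAverage (μ := volume) (s := Icc (1 : ℝ) 2) (f := f)
    (by simp [hvol]) (by simp [hvol]) hfm.aemeasurable
  rw [setLAverage_eq, hvol, div_one] at hfτ
  refine ⟨{i : ℕ // τ ∈ Icc (c i - d i) (c i + d i)}, inferInstance,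
    fun i => {u | u ∈ S ∧ τ • u ∈ t i}, fun i => d i, fun i => hd i, ?_, ?_, ?_⟩
  · intro u hu
    obtain ⟨i, hi⟩ := mem_iUnion.1 (hcov ⟨u, hu, τ, hτ.1, hτ.2, rfl⟩)
    have h1 := hc i _ hi
    rw [norm_smul, hS u hu, mul_one, Real.norm_eq_abs, abs_of_nonneg (by linarith [hτ.1])] at h1
    exact mem_iUnion.2 ⟨⟨i, h1⟩, hu, hi⟩
  · rintro i u ⟨-, hu⟩ v ⟨-, hv⟩
    have h1 := hdist i _ hu _ hv
    rw [dist_smul₀, Real.norm_eq_abs, abs_of_nonneg (by linarith [hτ.1])] at h1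
    nlinarith [hτ.1, dist_nonneg (x := u) (y := v)]
  · refine le_trans (le_of_eq ?_) (hfτ.trans hint)
    rw [hf]
    refine (tsum_subtype {i : ℕ | τ ∈ Icc (c i - d i) (c i + d i)}
      (fun i => ENNReal.ofReal (d i ^ s))).trans (tsum_congr fun i => ?_)
    simp only [indicator, mem_ofPred_eq]

end Cone

/-! ### Blow-ups of a bi-Lipschitz map -/

section Blowup

variable {E : Type*} [NormedAddCommGroup E] [NormedSpace ℝ E]

/-- The blow-ups of `h` have a pointwise limit along any ultrafilter, and it satisfies the same
bi-Lipschitz bounds as `h`. -/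
lemma exists_blowup [ProperSpace E] (U : Ultrafilter ℕ) {h : E → E} {L : ℝ} (h0 : h 0 = 0)
    (hbil : ∀ x y, (1 / L) * ‖x - y‖ ≤ ‖h x - h y‖ ∧ ‖h x - h y‖ ≤ L * ‖x - y‖) :
    ∃ g : E → E,
      (∀ x, Tendsto (fun k : ℕ => ((k : ℝ) + 1) • h (((k : ℝ) + 1)⁻¹ • x)) U (𝓝 (g x))) ∧
      (∀ x y, (1 / L) * ‖x - y‖ ≤ ‖g x - g y‖ ∧ ‖g x - g y‖ ≤ L * ‖x - y‖) := by
  have hb : ∀ (k : ℕ) (x y : E),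
      (1 / L) * ‖x - y‖ ≤ ‖((k : ℝ) + 1) • h (((k : ℝ) + 1)⁻¹ • x) -
        ((k : ℝ) + 1) • h (((k : ℝ) + 1)⁻¹ • y)‖ ∧
      ‖((k : ℝ) + 1) • h (((k : ℝ) + 1)⁻¹ • x) -
        ((k : ℝ) + 1) • h (((k : ℝ) + 1)⁻¹ • y)‖ ≤ L * ‖x - y‖ := by
    intro k x y
    have hk : (0 : ℝ) < (k : ℝ) + 1 := by positivity
    obtain ⟨h1, h2⟩ := hbil (((k : ℝ) + 1)⁻¹ • x) (((k : ℝ) + 1)⁻¹ • y)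
    rw [← smul_sub, norm_smul, norm_inv, Real.norm_eq_abs, abs_of_pos hk] at h1 h2
    rw [← smul_sub, norm_smul, Real.norm_eq_abs, abs_of_pos hk]
    constructor
    · calc _ = ((k : ℝ) + 1) * (1 / L * (((k : ℝ) + 1)⁻¹ * ‖x - y‖)) := by field_simp
        _ ≤ _ := by gcongr
    · calc _ ≤ ((k : ℝ) + 1) * (L * (((k : ℝ) + 1)⁻¹ * ‖x - y‖)) := by gcongr
        _ = _ := by field_simp
  have hlim : ∀ x, ∃ y,
      Tendsto (fun k : ℕ => ((k : ℝ) + 1) • h (((k : ℝ) + 1)⁻¹ • x)) U (𝓝 y) := by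
    intro x
    have hmem : ∀ k : ℕ, ((k : ℝ) + 1) • h (((k : ℝ) + 1)⁻¹ • x) ∈
        Metric.closedBall (0 : E) (L * ‖x‖) := fun k => by
      simpa [h0] using (hb k x 0).2
    obtain ⟨y, -, hy⟩ := (isCompact_closedBall (0 : E) (L * ‖x‖)).ultrafilter_le_nhds
      (U.map fun k : ℕ => ((k : ℝ) + 1) • h (((k : ℝ) + 1)⁻¹ • x))
      (le_principal_iff.2 (Ultrafilter.mem_map.2 (Filter.univ_mem' hmem)))
    exact ⟨y, hy⟩
  choose g hg using hlim
  refine ⟨g, hg, fun x y => ?_⟩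
  have h1 := ((hg x).sub (hg y)).norm
  exact ⟨ge_of_tendsto' h1 fun k => (hb k x y).1, le_of_tendsto' h1 fun k => (hb k x y).2⟩

/-- A blow-up limit of `h` sends the directions of a set `A` with (SSP) to directions of
the image of `A` under `h`. -/
lemma direction_blowup_mem {U : Ultrafilter ℕ} (hU : (U : Filter ℕ) ≤ atTop) {A : Set E}
    (hssp : SSP A) {h : E → E} {L : ℝ} (hL : 0 < L)
    (hlip : ∀ x y, ‖h x - h y‖ ≤ L * ‖x - y‖) {r : ℝ} (hr : 0 < r) {a : E} (ha : a ∈ dirSet A)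
    {z : E} (hz : z ≠ 0)
    (hlim : Tendsto (fun k : ℕ => ((k : ℝ) + 1) • h (((k : ℝ) + 1)⁻¹ • (r • a))) U (𝓝 z)) :
    ‖z‖⁻¹ • z ∈ dirSet (h '' A) := by
  set x : E := r • a with hx
  have hxn : ‖x‖ = r := by rw [hx, norm_smul, ha.1, mul_one, Real.norm_eq_abs, abs_of_pos hr]
  have hk : ∀ k : ℕ, (0 : ℝ) < (k : ℝ) + 1 := fun k => by positivity
  have hinv : Tendsto (fun k : ℕ => ((k : ℝ) + 1)⁻¹) atTop (𝓝 0) := by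
    simpa using tendsto_one_div_add_atTop_nhds_zero_nat (𝕜 := ℝ)
  have hnorm : ∀ k : ℕ, ‖((k : ℝ) + 1)⁻¹ • x‖ = ((k : ℝ) + 1)⁻¹ * r := fun k => by
    rw [norm_smul, hxn, norm_inv, Real.norm_eq_abs, abs_of_pos (hk k)]
  have hxk : Tendsto (fun k : ℕ => ((k : ℝ) + 1)⁻¹ • x) atTop (𝓝 0) := by
    simpa using hinv.smul_const x
  obtain ⟨b, hbA, hb⟩ := hssp (fun k : ℕ => ((k : ℝ) + 1)⁻¹ • x)
    (fun k => by rw [← norm_pos_iff, hnorm]; exact mul_pos (inv_pos.2 (hk k)) hr) hxk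
    ⟨a, ha, tendsto_const_nhds.congr fun k => by
      rw [hnorm, hx, smul_smul, smul_smul]
      have := (hk k).ne'
      field_simp
      simp⟩
  simp only [hnorm] at hb
  have hscaled : Tendsto (fun k : ℕ => ((k : ℝ) + 1) • h (b k)) U (𝓝 z) := by
    have h1 : Tendsto (fun k : ℕ => ((k : ℝ) + 1) • h (b k) -
        ((k : ℝ) + 1) • h (((k : ℝ) + 1)⁻¹ • x)) atTop (𝓝 0) := by
      have h2 := hb.const_mul (L * r)
      rw [mul_zero] at h2
      refine squeeze_zero_norm (fun k => ?_) h2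
      rw [← smul_sub, norm_smul, Real.norm_eq_abs, abs_of_pos (hk k), norm_sub_rev]
      calc _ ≤ ((k : ℝ) + 1) * (L * ‖((k : ℝ) + 1)⁻¹ • x - b k‖) := by
            gcongr; exact hlip _ _
        _ = _ := by have := (hk k).ne'; field_simp
    simpa using (h1.mono_left hU).add hlim
  have hdir : Tendsto (fun k : ℕ => ‖h (b k)‖⁻¹ • h (b k)) U (𝓝 (‖z‖⁻¹ • z)) := by
    refine ((hscaled.norm.inv₀ (norm_ne_zero_iff.2 hz)).smul hscaled).congr fun k => ?_
    rw [norm_smul, Real.norm_eq_abs, abs_of_pos (hk k), smul_smul]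
    congr 1
    have := (hk k).ne'
    rw [mul_inv]
    field_simp
  have hsmall : Tendsto (fun k : ℕ => h (b k)) U (𝓝 0) := by
    have h1 := (hinv.mono_left hU).smul hscaled
    rw [zero_smul] at h1
    exact h1.congr fun k => inv_smul_smul₀ (hk k).ne' _
  have hne : ∀ᶠ k in (U : Filter ℕ), h (b k) ≠ 0 :=
    (hscaled.eventually_ne hz).mono fun k h1 h2 => h1 (by rw [h2, smul_zero])
  -- Convergence along an ultrafilter only yields a convergent subsequence.
  have hclose : ∀ n : ℕ, ∃ k : ℕ, h (b k) ≠ 0 ∧ dist (h (b k)) 0 < 1 / ((n : ℝ) + 1) ∧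
      dist (‖h (b k)‖⁻¹ • h (b k)) (‖z‖⁻¹ • z) < 1 / ((n : ℝ) + 1) := fun n =>
    (hne.and (((Metric.tendsto_nhds.1 hsmall) _ (by positivity)).and
      ((Metric.tendsto_nhds.1 hdir) _ (by positivity)))).exists
  choose k hk1 hk2 hk3 using hclose
  refine ⟨?_, fun n => h (b (k n)), fun n => ⟨⟨_, hbA _, rfl⟩, hk1 n⟩, ?_, ?_⟩
  · rw [norm_smul, norm_inv, norm_norm, inv_mul_cancel₀ (norm_ne_zero_iff.2 hz)]
  · exact tendsto_iff_dist_tendsto_zero.2 (squeeze_zero (fun _ => dist_nonneg)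
      (fun n => (hk2 n).le) tendsto_one_div_add_atTop_nhds_zero_nat)
  · exact tendsto_iff_dist_tendsto_zero.2 (squeeze_zero (fun _ => dist_nonneg)
      (fun n => (hk3 n).le) tendsto_one_div_add_atTop_nhds_zero_nat)

end Blowup

/-! ### The dimension inequality -/

/-- for `A`, `B` satisfying (SSP) at `0` and a bi-Lipschitz homeomorphism `h`
of `ℝⁿ` fixing `0`, `dim_H(D(h(A)) ∩ D(h(B))) ≥ dim_H(D(A) ∩ D(B))`. -/
theorem dimH_dirSet_inter_le {n : ℕ} (A B : Set (EuclideanSpace ℝ (Fin n)))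
    (hA : (0 : EuclideanSpace ℝ (Fin n)) ∈ closure A)
    (hB : (0 : EuclideanSpace ℝ (Fin n)) ∈ closure B)
    (hsspA : SSP A) (hsspB : SSP B)
    (h : EuclideanSpace ℝ (Fin n) → EuclideanSpace ℝ (Fin n))
    (L : ℝ) (hL : 1 ≤ L) (h0 : h 0 = 0) (hsurj : Function.Surjective h)
    (hbil : ∀ x y, (1 / L) * ‖x - y‖ ≤ ‖h x - h y‖ ∧ ‖h x - h y‖ ≤ L * ‖x - y‖) :
    dimH (dirSet A ∩ dirSet B) ≤ dimH (dirSet (h '' A) ∩ dirSet (h '' B)) := by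
  have hLpos : 0 < L := by linarith
  obtain ⟨g, hg, hgb⟩ := exists_blowup (hyperfilter ℕ) h0 hbil
  have hU : ((hyperfilter ℕ : Ultrafilter ℕ) : Filter ℕ) ≤ atTop := Nat.hyperfilter_le_atTop
  have hg0 : g 0 = 0 := by
    refine tendsto_nhds_unique (hg 0) ?_
    simp [h0]
  by_contra! hlt
  obtain ⟨s, hs1, hs2⟩ := ENNReal.lt_iff_exists_nnreal_btwn.1 hlt
  have hs : (0 : ℝ) < s := by
    exact_mod_cast (zero_le.trans_lt hs1 : (0 : ℝ≥0∞) < s)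
  have hcone := cone_null hs (R := L * 2) (by positivity) (fun u hu => hu.1.1)
    (hausdorffMeasure_of_dimH_lt hs1)
  have hanti : AntilipschitzWith L.toNNReal g := AntilipschitzWith.of_le_mul_dist fun x y => by
    rw [Real.coe_toNNReal _ hLpos.le, dist_eq_norm, dist_eq_norm]
    have h1 := (hgb x y).1
    rw [one_div, inv_mul_le_iff₀ hLpos] at h1
    exact h1
  have hnull : μH[(s : ℝ) + 1] {x : EuclideanSpace ℝ (Fin n) |
      ∃ u ∈ dirSet A ∩ dirSet B, ∃ r : ℝ, 1 ≤ r ∧ r ≤ 2 ∧ x = r • u} = 0 := by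
    refine le_antisymm ((hanti.le_hausdorffMeasure_image (by positivity) _).trans ?_) zero_le
    refine (mul_eq_zero.2 (Or.inr (measure_mono_null ?_ hcone))).le
    rintro _ ⟨_, ⟨u, hu, r, hr1, hr2, rfl⟩, rfl⟩
    have hr : 0 < r := by linarith
    have hnorm : ‖r • u‖ = r := by
      rw [norm_smul, hu.1.1, mul_one, Real.norm_eq_abs, abs_of_pos hr]
    have hb := hgb (r • u) 0
    rw [hg0, sub_zero, sub_zero, hnorm] at hb
    have hgpos : 0 < ‖g (r • u)‖ := lt_of_lt_of_le (by positivity) hb.1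
    have hz : g (r • u) ≠ 0 := norm_pos_iff.1 hgpos
    have hlip := fun x y => (hbil x y).2
    refine ⟨‖g (r • u)‖⁻¹ • g (r • u),
      ⟨direction_blowup_mem hU hsspA hLpos hlip hr hu.1 hz (hg _),
        direction_blowup_mem hU hsspB hLpos hlip hr hu.2 hz (hg _)⟩,
      ‖g (r • u)‖, norm_nonneg _, hb.2.trans (by gcongr), ?_⟩
    rw [smul_inv_smul₀ hgpos.ne']
  have hbase := base_null hs (fun u hu => hu.1.1) hnull
  rw [hausdorffMeasure_of_lt_dimH hs2] at hbase
  exact ENNReal.top_ne_zero hbase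
end

section
/- Let A, B ⊆ ℝⁿ with 0 ∈ closure(A) ∩ closure(B), and let h : ℝⁿ → ℝⁿ be a bi-Lipschitz homeomorphism with h(0) = 0. Suppose that A or B satisfies condition (SSP) at 0, and that h(A) or h(B) satisfies condition (SSP) at 0. Then A and B are weakly transverse at 0 if and only if h(A) and h(B) are weakly transverse at 0; i.e., D(A) ∩ D(B) = ∅ if and only if D(h(A)) ∩ D(h(B)) = ∅. -/
/-!
The argument works with pairs of sequences `x i ∈ B \ {0}`, `y i ∈ A` such that `x i → 0` and
`‖x i - y i‖ / ‖x i‖ → 0`. Such a pair yields a common direction of `A` and `B`: by compactness of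
the sphere a subsequence of `x i / ‖x i‖` converges, and `y i / ‖y i‖` has the same limit along it
(`dirSet_inter_nonempty_of_close`). Conversely, if `A` is (SSP), a common direction of `A` and `B`
yields such a pair. A bi-Lipschitz map fixing `0` carries pairs of this kind to pairs of this kind,
since it changes `‖x i - y i‖` and `‖x i‖` by bounded factors. Hence a common direction of `A` and
`B` produces one of `h(A)` and `h(B)` (`dirSet_inter_image_nonempty`); the other implication is the
same statement for `h⁻¹`.
-/

open Filter Topology Set

section

variable {E : Type*} [NormedAddCommGroup E] [NormedSpace ℝ E]

lemma norm_normalize_sub_le {x y : E} (hx : x ≠ 0) (hy : y ≠ 0) :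
    ‖(‖x‖)⁻¹ • x - (‖y‖)⁻¹ • y‖ ≤ 2 * (‖x - y‖ / ‖x‖) := by
  have hx' : 0 < ‖x‖ := norm_pos_iff.2 hx
  have hy' : 0 < ‖y‖ := norm_pos_iff.2 hy
  have e : (‖x‖)⁻¹ • x - (‖y‖)⁻¹ • y = (‖x‖)⁻¹ • (x - y) + ((‖x‖)⁻¹ - (‖y‖)⁻¹) • y := by
    module
  have h1 : ‖(‖x‖)⁻¹ • (x - y)‖ = ‖x - y‖ / ‖x‖ := by
    rw [norm_smul, norm_inv, norm_norm]; ring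
  have h2 : ‖((‖x‖)⁻¹ - (‖y‖)⁻¹) • y‖ ≤ ‖x - y‖ / ‖x‖ := by
    have e2 : ((‖x‖)⁻¹ - (‖y‖)⁻¹) = (‖y‖ - ‖x‖) / (‖x‖ * ‖y‖) := by field_simp
    rw [norm_smul, e2, norm_div, norm_mul, norm_norm, norm_norm, Real.norm_eq_abs]
    have e3 : |‖y‖ - ‖x‖| / (‖x‖ * ‖y‖) * ‖y‖ = |‖y‖ - ‖x‖| / ‖x‖ := by field_simp
    rw [e3, abs_sub_comm]
    gcongr
    exact abs_norm_sub_norm_le x y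
  rw [e]
  linarith [norm_add_le ((‖x‖)⁻¹ • (x - y)) (((‖x‖)⁻¹ - (‖y‖)⁻¹) • y)]

/-- A sequence in `A` that is relatively close to `x` has the same limiting direction as `x`. -/
lemma mem_dirSet_of_close {A : Set E} {x y : ℕ → E} {v : E} (hv : ‖v‖ = 1)
    (hx : ∀ i, x i ≠ 0) (hx0 : Tendsto x atTop (𝓝 0))
    (hxv : Tendsto (fun i => (‖x i‖)⁻¹ • x i) atTop (𝓝 v)) (hy : ∀ i, y i ∈ A)
    (hxy : Tendsto (fun i => ‖x i - y i‖ / ‖x i‖) atTop (𝓝 0)) : v ∈ dirSet A := by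
  -- Once the relative distance is below `1`, the points `y i` are nonzero.
  obtain ⟨N, hN⟩ := eventually_atTop.1 (hxy.eventually (gt_mem_nhds zero_lt_one))
  have hlt : ∀ i, ‖x (i + N) - y (i + N)‖ < ‖x (i + N)‖ := fun i => by
    have := hN (i + N) (by omega)
    rwa [div_lt_one (norm_pos_iff.2 (hx _))] at this
  have hy0 : ∀ i, y (i + N) ≠ 0 := fun i h => by
    have := hlt i
    simp [h] at this
  have hx0' : Tendsto (fun i => x (i + N)) atTop (𝓝 0) := hx0.comp (tendsto_add_atTop_nat N)
  have hxv' : Tendsto (fun i => (‖x (i + N)‖)⁻¹ • x (i + N)) atTop (𝓝 v) :=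
    hxv.comp (tendsto_add_atTop_nat N)
  have hxy' : Tendsto (fun i => ‖x (i + N) - y (i + N)‖ / ‖x (i + N)‖) atTop (𝓝 0) :=
    hxy.comp (tendsto_add_atTop_nat N)
  refine ⟨hv, fun i => y (i + N), fun i => ⟨hy _, by simpa using hy0 i⟩, ?_, ?_⟩
  · refine squeeze_zero_norm (a := fun i => 2 * ‖x (i + N)‖) (fun i => ?_) ?_
    · have := norm_sub_norm_le (y (i + N)) (x (i + N))
      rw [norm_sub_rev] at this
      linarith [hlt i]
    · simpa using hx0'.norm.const_mul 2
  · have hd : Tendsto (fun i => (‖x (i + N)‖)⁻¹ • x (i + N) - (‖y (i + N)‖)⁻¹ • y (i + N))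
        atTop (𝓝 0) :=
      squeeze_zero_norm (fun i => norm_normalize_sub_le (hx _) (hy0 i))
        (by simpa using hxy'.const_mul 2)
    simpa using hxv'.sub hd

/-- Relatively close null sequences in `A` and `B` force a common direction, by compactness of the
unit sphere. -/
lemma dirSet_inter_nonempty_of_close [ProperSpace E] {A B : Set E} {x y : ℕ → E}
    (hx : ∀ i, x i ∈ B \ {0}) (hx0 : Tendsto x atTop (𝓝 0)) (hy : ∀ i, y i ∈ A)
    (hxy : Tendsto (fun i => ‖x i - y i‖ / ‖x i‖) atTop (𝓝 0)) :
    (dirSet A ∩ dirSet B).Nonempty := by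
  have hne : ∀ i, x i ≠ 0 := fun i => (hx i).2
  have hs : ∀ i, (‖x i‖)⁻¹ • x i ∈ Metric.sphere (0 : E) 1 := fun i => by
    have := norm_ne_zero_iff.2 (hne i)
    simp [norm_smul, this]
  obtain ⟨v, hv, φ, hφ, hlim⟩ := (isCompact_sphere (0 : E) 1).tendsto_subseq hs
  have hv1 : ‖v‖ = 1 := by simpa using hv
  have hφ' := hφ.tendsto_atTop
  exact ⟨v, mem_dirSet_of_close hv1 (fun i => hne (φ i)) (hx0.comp hφ') hlim
      (fun i => hy (φ i)) (hxy.comp hφ'),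
    hv1, fun i => x (φ i), fun i => hx (φ i), hx0.comp hφ', hlim⟩

/-- The case of `dirSet_inter_image_nonempty` in which `A` is the set satisfying (SSP). -/
lemma dirSet_inter_image_nonempty_of_left [ProperSpace E] {A B : Set E} {h : E → E} {L : ℝ}
    (hL : 1 ≤ L) (h0 : h 0 = 0)
    (hbil : ∀ x y, (1 / L) * ‖x - y‖ ≤ ‖h x - h y‖ ∧ ‖h x - h y‖ ≤ L * ‖x - y‖)
    (hA : SSP A) (hAB : (dirSet A ∩ dirSet B).Nonempty) :
    (dirSet (h '' A) ∩ dirSet (h '' B)).Nonempty := by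
  obtain ⟨v, hvA, -, x, hx, hx0, hxv⟩ := hAB
  have hne : ∀ i, 0 < ‖x i‖ := fun i => norm_pos_iff.2 (hx i).2
  obtain ⟨y, hy, hxy⟩ := hA x (fun i => (hx i).2) hx0 ⟨v, hvA, hxv⟩
  have hL0 : 0 < L := by linarith
  have hlow : ∀ i, (1 / L) * ‖x i‖ ≤ ‖h (x i)‖ := fun i => by simpa [h0] using (hbil (x i) 0).1
  have hup : ∀ i, ‖h (x i)‖ ≤ L * ‖x i‖ := fun i => by simpa [h0] using (hbil (x i) 0).2
  have hpos : ∀ i, 0 < (1 / L) * ‖x i‖ := fun i => mul_pos (by positivity) (hne i)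
  refine dirSet_inter_nonempty_of_close (x := fun i => h (x i)) (y := fun i => h (y i))
    (fun i => ⟨mem_image_of_mem h (hx i).1, norm_pos_iff.1 ((hpos i).trans_le (hlow i))⟩)
    (squeeze_zero_norm hup (by simpa using hx0.norm.const_mul L))
    (fun i => mem_image_of_mem h (hy i)) ?_
  refine squeeze_zero (g := fun i => L ^ 2 * (‖x i - y i‖ / ‖x i‖)) (fun i => by positivity)
    (fun i => ?_) (by simpa using hxy.const_mul (L ^ 2))
  calc ‖h (x i) - h (y i)‖ / ‖h (x i)‖ ≤ (L * ‖x i - y i‖) / ((1 / L) * ‖x i‖) :=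
        div_le_div₀ (by positivity) (hbil _ _).2 (hpos i) (hlow i)
    _ = L ^ 2 * (‖x i - y i‖ / ‖x i‖) := by
        have := (hne i).ne'
        field_simp

/-- If `A` or `B` satisfies (SSP), a common direction of `A` and `B` yields a common direction of
their bi-Lipschitz images. -/
lemma dirSet_inter_image_nonempty [ProperSpace E] {A B : Set E} {h : E → E} {L : ℝ}
    (hL : 1 ≤ L) (h0 : h 0 = 0)
    (hbil : ∀ x y, (1 / L) * ‖x - y‖ ≤ ‖h x - h y‖ ∧ ‖h x - h y‖ ≤ L * ‖x - y‖)
    (hssp : SSP A ∨ SSP B) (hAB : (dirSet A ∩ dirSet B).Nonempty) :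
    (dirSet (h '' A) ∩ dirSet (h '' B)).Nonempty := by
  rcases hssp with hA | hB
  · exact dirSet_inter_image_nonempty_of_left hL h0 hbil hA hAB
  · rw [inter_comm] at hAB ⊢
    exact dirSet_inter_image_nonempty_of_left hL h0 hbil hB hAB

end

/-- if `A` or `B` satisfies (SSP) at `0`, and `h(A)` or `h(B)` satisfies (SSP)
at `0`, then a bi-Lipschitz homeomorphism `h` of `ℝⁿ` fixing `0` preserves weak transversality:
`D(A) ∩ D(B) = ∅ ↔ D(h(A)) ∩ D(h(B)) = ∅`. -/
theorem weak_transversality_biLipschitz_invariant {n : ℕ}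
    (A B : Set (EuclideanSpace ℝ (Fin n)))
    (hA : (0 : EuclideanSpace ℝ (Fin n)) ∈ closure A)
    (hB : (0 : EuclideanSpace ℝ (Fin n)) ∈ closure B)
    (h : EuclideanSpace ℝ (Fin n) → EuclideanSpace ℝ (Fin n))
    (L : ℝ) (hL : 1 ≤ L) (h0 : h 0 = 0) (hsurj : Function.Surjective h)
    (hbil : ∀ x y, (1 / L) * ‖x - y‖ ≤ ‖h x - h y‖ ∧ ‖h x - h y‖ ≤ L * ‖x - y‖)
    (hssp : SSP A ∨ SSP B) (hssp' : SSP (h '' A) ∨ SSP (h '' B)) :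
    dirSet A ∩ dirSet B = ∅ ↔ dirSet (h '' A) ∩ dirSet (h '' B) = ∅ := by
  have hL0 : 0 < L := by linarith
  have hinj : Function.Injective h := fun x y hxy => by
    have := (hbil x y).1
    rw [hxy, sub_self, norm_zero] at this
    have h1 : ‖x - y‖ ≤ 0 := nonpos_of_mul_nonpos_right this (by positivity)
    exact sub_eq_zero.1 (norm_le_zero_iff.1 h1)
  obtain ⟨g, hgh, hhg⟩ := Function.bijective_iff_has_inverse.1 ⟨hinj, hsurj⟩
  have hgbil : ∀ x y, (1 / L) * ‖x - y‖ ≤ ‖g x - g y‖ ∧ ‖g x - g y‖ ≤ L * ‖x - y‖ := by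
    intro x y
    have := hbil (g x) (g y)
    rw [hhg x, hhg y, one_div_mul_eq_div, div_le_iff₀' hL0] at this
    exact ⟨by rw [one_div_mul_eq_div, div_le_iff₀' hL0]; exact this.2, this.1⟩
  have hg0 : g 0 = 0 := by simpa [h0] using hgh 0
  rw [← not_iff_not, ← Ne, ← Ne, ← nonempty_iff_ne_empty, ← nonempty_iff_ne_empty]
  refine ⟨dirSet_inter_image_nonempty hL h0 hbil hssp, fun hne => ?_⟩
  simpa only [hgh.image_image] using dirSet_inter_image_nonempty hL hg0 hgbil hssp' hne
end
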